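/- arXiv:1912.13494 — 9 statements merged into one kernel-verified Lean document; each statement's English description precedes it below -/
import Mathlib

section
/- Let 0 < m < L, let κ = L/m, let α > 0, and let δ ∈ [0, 2/(κ+1)). Set ρ_GD(δ) = max(1−(1−δ)αm, (1+δ)αL−1) and let ρ ≥ ρ_GD(δ). If α ≤ (1/(1−δ))·(2/(L+m) − δ/m) or α ≥ (1/(1+δ))·(2/(L+m) + δ/L), then there exists c > 0 such that for every f ∈ S(m,L) with reference point x⋆, every sequence e : ℕ → ℝⁿ with |e(k)| ≤ δ|∇f(x(k))| for all k, and every sequence x : ℕ → ℝⁿ satisfying x(k+1) = x(k) − α(∇f(x(k)) + e(k)) for all k, one has |x(k) − x⋆| ≤ c ρᵏ |x(0) − x⋆| for all k ≥ 0. -/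
open RealInnerProductSpace

/-!
The bound holds with `c = 1`, because every step contracts the distance to `x⋆` by `ρ_GD(δ)`.

Put `y = x - x⋆`, `u = ∇f x`, `r = ‖u‖`. The triangle inequality bounds the new distance by
`‖y - α u‖ + α δ r`. The sector condition gives `m ‖y‖ ≤ r ≤ L ‖y‖`, and, through its lower bound
on `⟪y, u⟫`, it gives `‖y - α u‖² ≤ A ‖y‖² - B r²` with `B = α (2 / (L + m) - α)` and
`A = 1 - 2 α m L / (L + m)`. It remains to maximize `√(A ‖y‖² - B r²) + α δ r` over
`r ∈ [m ‖y‖, L ‖y‖]`. The two alternatives for the step size say exactly that the derivative in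
`r` is nonpositive at the left endpoint, respectively nonnegative at the right endpoint, so the
maximum sits at that endpoint (`scalar_small_step`, `scalar_large_step`), where its value is
`(1 - (1 - δ) α m) ‖y‖`, respectively `((1 + δ) α L - 1) ‖y‖`.
-/

/-- The maximum over `r` is at `r = m Y`. Here `t` stands for `2 / (L + m)` and `D` for
`‖y - α u‖`; `hslope` is the sign condition on the derivative at the left endpoint. -/
lemma scalar_small_step {m L α δ t Y r D : ℝ} (hm : 0 < m) (hα : 0 < α) (hδ : 0 ≤ δ)
    (hY : 0 ≤ Y) (ht : t * (L + m) = 2) (hp : 0 < 1 - α * m)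
    (hslope : δ * (1 - α * m) ≤ m * (t - α)) (hr : m * Y ≤ r)
    (hD : D ^ 2 ≤ Y ^ 2 * (1 - α * t * (m * L)) - α * (t - α) * r ^ 2) :
    D + α * δ * r ≤ (1 - (1 - δ) * (α * m)) * Y := by
  obtain ⟨p, hpdef⟩ : ∃ p, p = 1 - α * m := ⟨_, rfl⟩
  rw [← hpdef] at hp hslope
  have hD' : D ^ 2 ≤ (p * Y) ^ 2 - α * (t - α) * ((r - m * Y) * (r + m * Y)) := by
    have h : Y ^ 2 * (1 - α * t * (m * L)) - α * (t - α) * r ^ 2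
        = (p * Y) ^ 2 - α * (t - α) * ((r - m * Y) * (r + m * Y)) := by
      rw [hpdef]
      linear_combination (-(α * m * Y ^ 2)) * ht
    linarith
  have hB : 0 ≤ t - α := by
    have : 0 ≤ m * (t - α) := le_trans (by positivity) hslope
    exact nonneg_of_mul_nonneg_right this hm
  have hd : 0 ≤ r - m * Y := by linarith
  have h1 : 2 * (p * Y) * (α * δ) * (r - m * Y)
      ≤ α * (t - α) * ((r - m * Y) * (r + m * Y)) := by
    have a1 : (2 * α * (r - m * Y) * Y) * (δ * p) ≤ (2 * α * (r - m * Y) * Y) * (m * (t - α)) :=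
      mul_le_mul_of_nonneg_left hslope (by positivity)
    have a2 : 0 ≤ α * (t - α) * (r - m * Y) * (r - m * Y) := by positivity
    nlinarith
  -- The square bound on `D` forces this nonnegativity, since its right side must be nonnegative.
  have h2 : 0 ≤ p * Y - α * δ * (r - m * Y) := by
    rcases hY.eq_or_lt with h0 | h0
    · subst h0
      have hr0 : 0 ≤ r := by linarith
      rcases hr0.eq_or_lt with h3 | h3
      · subst h3; simp
      · have a3 : 0 ≤ (t - α) := hB
        have a4 : α * (t - α) * r ^ 2 ≤ 0 := by nlinarith [sq_nonneg D]
        have a5 : t - α ≤ 0 := by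
          by_contra h
          push Not at h
          have : 0 < α * (t - α) * r ^ 2 := by positivity
          linarith
        have a6 : δ * p ≤ 0 := by nlinarith
        have a7 : δ ≤ 0 := by
          by_contra h
          push Not at h
          have : 0 < δ * p := by positivity
          linarith
        have a8 : δ = 0 := le_antisymm a7 hδ
        simp [a8]
    · have hq : 0 < p * Y := by positivity
      have : 0 ≤ (p * Y) * (p * Y - 2 * (α * δ * (r - m * Y))) := by nlinarith [sq_nonneg D]
      have h4 := nonneg_of_mul_nonneg_right this hq
      have : 0 ≤ α * δ * (r - m * Y) := by positivity
      linarith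
  have h3 : D ≤ p * Y - α * δ * (r - m * Y) := by
    refine le_of_abs_le (abs_le_of_sq_le_sq ?_ h2)
    nlinarith [sq_nonneg (α * δ * (r - m * Y))]
  rw [hpdef] at h3
  linarith

/-- The maximum over `r` is at `r = L Y`; `t` and `D` are as in `scalar_small_step`, and `hslope`
is the sign condition on the derivative at the right endpoint. -/
lemma scalar_large_step {m L α δ t Y r D : ℝ} (hL : 0 < L) (hα : 0 < α) (hδ : 0 ≤ δ)
    (hY : 0 ≤ Y) (ht : t * (L + m) = 2) (hq : 0 ≤ α * L - 1)
    (hslope : L * (t - α) ≤ δ * (α * L - 1)) (hr0 : 0 ≤ r) (hr : r ≤ L * Y)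
    (hD : D ^ 2 ≤ Y ^ 2 * (1 - α * t * (m * L)) - α * (t - α) * r ^ 2) :
    D + α * δ * r ≤ ((1 + δ) * (α * L) - 1) * Y := by
  obtain ⟨q, hqdef⟩ : ∃ q, q = α * L - 1 := ⟨_, rfl⟩
  rw [← hqdef] at hq hslope
  have hD' : D ^ 2 ≤ (q * Y) ^ 2 + α * (t - α) * ((L * Y - r) * (L * Y + r)) := by
    have h : Y ^ 2 * (1 - α * t * (m * L)) - α * (t - α) * r ^ 2
        = (q * Y) ^ 2 + α * (t - α) * ((L * Y - r) * (L * Y + r)) := by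
      rw [hqdef]
      linear_combination (-(α * L * Y ^ 2)) * ht
    linarith
  have hd : 0 ≤ L * Y - r := by linarith
  have h1 : α * (t - α) * ((L * Y - r) * (L * Y + r))
      ≤ 2 * (q * Y) * (α * δ) * (L * Y - r) := by
    rcases le_total 0 (t - α) with hB | hB
    · have a1 : (2 * α * (L * Y - r) * Y) * (L * (t - α)) ≤ (2 * α * (L * Y - r) * Y) * (δ * q) :=
        mul_le_mul_of_nonneg_left hslope (by positivity)
      have a2 : 0 ≤ α * (t - α) * (L * Y - r) * (L * Y - r) := by positivity
      nlinarith
    · have a1 : 0 ≤ 2 * (q * Y) * (α * δ) * (L * Y - r) := by positivity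
      have a2 : 0 ≤ α * ((L * Y - r) * (L * Y + r)) := by positivity
      nlinarith
  have h3 : D ≤ q * Y + α * δ * (L * Y - r) := by
    refine le_of_abs_le (abs_le_of_sq_le_sq ?_ (by positivity))
    nlinarith [sq_nonneg (α * δ * (L * Y - r))]
  rw [hqdef] at h3
  linarith

/-- Norm consequences of the sector condition `⟪m y - u, L y - u⟫ ≤ 0`. -/
lemma sector_bounds {E : Type*} [NormedAddCommGroup E] [InnerProductSpace ℝ E]
    {m L α t : ℝ} (hm : 0 < m) (hmL : m < L) (hα : 0 < α) (ht : t * (L + m) = 2) (y u : E)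
    (h : ⟪m • y - u, L • y - u⟫ ≤ 0) :
    m * ‖y‖ ≤ ‖u‖ ∧ ‖u‖ ≤ L * ‖y‖ ∧
      ‖y - α • u‖ ^ 2 ≤ ‖y‖ ^ 2 * (1 - α * t * (m * L)) - α * (t - α) * ‖u‖ ^ 2 := by
  have hexp : m * L * ‖y‖ ^ 2 - (L + m) * ⟪y, u⟫ + ‖u‖ ^ 2 ≤ 0 := by
    have e : ⟪m • y - u, L • y - u⟫ = m * L * ‖y‖ ^ 2 - (L + m) * ⟪y, u⟫ + ‖u‖ ^ 2 := by
      simp only [inner_sub_left, inner_sub_right, real_inner_smul_left, real_inner_smul_right,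
        real_inner_self_eq_norm_sq, real_inner_comm y u]
      ring
    linarith
  have hcs : ⟪y, u⟫ ≤ ‖y‖ * ‖u‖ := real_inner_le_norm y u
  have hY := norm_nonneg y
  have hf : (‖u‖ - m * ‖y‖) * (‖u‖ - L * ‖y‖) ≤ 0 := by nlinarith
  have hmy : m * ‖y‖ ≤ L * ‖y‖ := by gcongr
  refine ⟨?_, ?_, ?_⟩
  · by_contra hc
    push Not at hc
    nlinarith
  · by_contra hc
    push Not at hc
    nlinarith
  · have e : ‖y - α • u‖ ^ 2 = ‖y‖ ^ 2 - 2 * α * ⟪y, u⟫ + α ^ 2 * ‖u‖ ^ 2 := by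
      rw [norm_sub_sq_real, real_inner_smul_right, norm_smul, mul_pow, Real.norm_eq_abs, sq_abs]
      ring
    have htpos : 0 < t := by
      by_contra hc
      push Not at hc
      nlinarith
    have h2 : (α * t) * (m * L * ‖y‖ ^ 2 - (L + m) * ⟪y, u⟫ + ‖u‖ ^ 2) ≤ 0 :=
      mul_nonpos_of_nonneg_of_nonpos (by positivity) hexp
    have h3 : (α * t) * ((L + m) * ⟪y, u⟫) = 2 * α * ⟪y, u⟫ := by
      linear_combination (α * ⟪y, u⟫) * ht
    rw [e]
    linarith

/-- **Proposition 1 (inexact gradient descent over `S(m,L)`).**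
Let `0 < m < L`, `κ = L/m`, `α > 0`, `δ ∈ [0, 2/(κ+1))`,
`ρ_GD(δ) = max (1-(1-δ)αm) ((1+δ)αL-1)` and `ρ ≥ ρ_GD(δ)`.  If
`α ≤ (1/(1-δ))(2/(L+m) - δ/m)` or `α ≥ (1/(1+δ))(2/(L+m) + δ/L)`, then there is `c > 0` such
that for every `f ∈ S(m,L)` with reference point `x⋆`, every noise sequence `e` with
`|e k| ≤ δ |∇f (x k)|`, and every sequence of inexact gradient descent iterates
`x (k+1) = x k - α (∇f (x k) + e k)`, one has `|x k - x⋆| ≤ c ρ^k |x 0 - x⋆|`. -/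
theorem stmt_0 (n : ℕ) (m L α δ ρ : ℝ)
    (hm : 0 < m) (hmL : m < L) (hα : 0 < α)
    (hδ0 : 0 ≤ δ) (hδ1 : δ < 2 / (L / m + 1))
    (hρ : max (1 - (1 - δ) * (α * m)) ((1 + δ) * (α * L) - 1) ≤ ρ)
    (hstep : α ≤ 1 / (1 - δ) * (2 / (L + m) - δ / m) ∨
             1 / (1 + δ) * (2 / (L + m) + δ / L) ≤ α) :
    ∃ c > 0, ∀ (f : EuclideanSpace ℝ (Fin n) → ℝ) (xs : EuclideanSpace ℝ (Fin n)),
      ContDiff ℝ 1 f →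
      (∀ x : EuclideanSpace ℝ (Fin n),
        ⟪m • (x - xs) - gradient f x, L • (x - xs) - gradient f x⟫ ≤ 0) →
      ∀ (x e : ℕ → EuclideanSpace ℝ (Fin n)),
        (∀ k, ‖e k‖ ≤ δ * ‖gradient f (x k)‖) →
        (∀ k, x (k + 1) = x k - α • (gradient f (x k) + e k)) →
        ∀ k, ‖x k - xs‖ ≤ c * ρ ^ k * ‖x 0 - xs‖ := by
  have hL : 0 < L := hm.trans hmL
  have hLm : 0 < L + m := by linarith
  obtain ⟨t, htdef⟩ : ∃ t, t = 2 / (L + m) := ⟨_, rfl⟩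
  have ht : t * (L + m) = 2 := by rw [htdef]; field_simp
  have htm : t * m < 1 := by
    rw [htdef, div_mul_eq_mul_div, div_lt_one hLm]; linarith
  have htL : 1 < t * L := by linarith
  have hδlt : δ < 1 := by
    have h1 : 1 < L / m := (one_lt_div hm).2 hmL
    have h2 : 2 / (L / m + 1) < 1 := by rw [div_lt_one (by linarith)]; linarith
    linarith
  obtain ⟨hρ1, hρ2⟩ := max_le_iff.1 hρ
  -- One step on the error `y`, for a gradient value `u` in the sector.
  have key : 0 ≤ ρ ∧ ∀ y u : EuclideanSpace ℝ (Fin n), ⟪m • y - u, L • y - u⟫ ≤ 0 →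
      ‖y - α • u‖ + α * δ * ‖u‖ ≤ ρ * ‖y‖ := by
    rw [← htdef] at hstep
    rcases hstep with hs | hs
    · have hs' : α * (1 - δ) * m ≤ t * m - δ := by
        rw [one_div_mul_eq_div, le_div_iff₀ (by linarith)] at hs
        have := mul_le_mul_of_nonneg_right hs hm.le
        rwa [sub_mul, div_mul_cancel₀ _ hm.ne'] at this
      have hp : 0 < 1 - α * m := by
        by_contra hc
        push Not at hc
        nlinarith
      refine ⟨by nlinarith [mul_nonneg hδ0 (mul_pos hα hm).le], fun y u h => ?_⟩
      obtain ⟨h1, h2, h3⟩ := sector_bounds hm hmL hα ht y u h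
      exact (scalar_small_step hm hα hδ0 (norm_nonneg y) ht hp (by linarith) h1 h3).trans
        (mul_le_mul_of_nonneg_right hρ1 (norm_nonneg y))
    · have hs' : t * L + δ ≤ α * (1 + δ) * L := by
        rw [one_div_mul_eq_div, div_le_iff₀ (by linarith)] at hs
        have := mul_le_mul_of_nonneg_right hs hL.le
        rwa [add_mul, div_mul_cancel₀ _ hL.ne'] at this
      have hq : 0 ≤ α * L - 1 := by
        by_contra hc
        push Not at hc
        nlinarith
      refine ⟨by nlinarith [mul_nonneg hδ0 (mul_pos hα hL).le], fun y u h => ?_⟩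
      obtain ⟨h1, h2, h3⟩ := sector_bounds hm hmL hα ht y u h
      exact (scalar_large_step hL hα hδ0 (norm_nonneg y) ht hq (by linarith) (norm_nonneg u)
        h2 h3).trans (mul_le_mul_of_nonneg_right hρ2 (norm_nonneg y))
  obtain ⟨hρ0, hone⟩ := key
  refine ⟨1, one_pos, fun f xs _ hsec x e he hx k => ?_⟩
  induction k with
  | zero => simp
  | succ k ih =>
    have hsplit : x (k + 1) - xs = ((x k - xs) - α • gradient f (x k)) - α • e k := by
      rw [hx k, smul_add]; abel
    calc ‖x (k + 1) - xs‖
        ≤ ‖(x k - xs) - α • gradient f (x k)‖ + ‖α • e k‖ := by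
          rw [hsplit]; exact norm_sub_le _ _
      _ ≤ ‖(x k - xs) - α • gradient f (x k)‖ + α * δ * ‖gradient f (x k)‖ := by
          rw [norm_smul, Real.norm_of_nonneg hα.le, mul_assoc]
          gcongr
          exact he k
      _ ≤ ρ * ‖x k - xs‖ := hone _ _ (hsec (x k))
      _ ≤ ρ * (1 * ρ ^ k * ‖x 0 - xs‖) := by gcongr
      _ = 1 * ρ ^ (k + 1) * ‖x 0 - xs‖ := by ring
end

section
/- Let 0 < m < L, let 0 < α < 2/(L+m), and let δ ∈ [0,1). Suppose ρ ≥ ( 1 − 2αLm/(L+m) + αδ²(L+m−2αLm)/(2−α(L+m)) )^{1/2} (the argument of the square root being positive under these hypotheses). Then there exists c > 0 such that for every f ∈ S(m,L) with reference point x⋆, every sequence e : ℕ → ℝⁿ with |e(k)| ≤ δ|∇f(x(k))| for all k, and every sequence x : ℕ → ℝⁿ satisfying x(k+1) = x(k) − α(∇f(x(k)) + e(k)) for all k, one has |x(k) − x⋆| ≤ c ρᵏ |x(0) − x⋆| for all k ≥ 0. -/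
/-!
The constant `c = 1` works, since the squared distance to the reference point contracts at every
step by the factor under the square root (`inexact_step`). Write `S = L + m`, `y = x - x⋆`,
`g = ∇f x` and `u = y - αg`, so that the next error is `u - αe`. Young's inequality with weight
`t = αδ²S / (2 - αS)`, together with `‖e‖ ≤ δ‖g‖`, bounds `‖u - αe‖²` by
`(1 + t)‖u‖² + (α²δ² + α(2 - αS)/S)‖g‖²`. For this choice of `t` the bound minus the claimed
`(1 + t)(1 - 2αLm/S)‖y‖²` is exactly `2α(1 + t)/S` times the sector expression
`Lm‖y‖² - S⟪y, g⟫ + ‖g‖²`, which is nonpositive.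
-/

open RealInnerProductSpace

/-- One step contracts the squared error. -/
lemma inexact_step {E : Type*} [NormedAddCommGroup E] [InnerProductSpace ℝ E]
    {m L α δ : ℝ} (hS : 0 < L + m) (hα : 0 < α) (hD : 0 < 2 - α * (L + m))
    (y g e : E) (hsec : ⟪m • y - g, L • y - g⟫ ≤ 0) (he : ‖e‖ ≤ δ * ‖g‖) :
    ‖y - α • (g + e)‖ ^ 2 ≤ (1 - 2 * α * L * m / (L + m) +
      α * δ ^ 2 * (L + m - 2 * α * L * m) / (2 - α * (L + m))) * ‖y‖ ^ 2 := by
  have hQ : L * m * ‖y‖ ^ 2 - (L + m) * ⟪y, g⟫ + ‖g‖ ^ 2 ≤ 0 := by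
    simp only [inner_sub_left, inner_sub_right, real_inner_smul_left, real_inner_smul_right,
      real_inner_self_eq_norm_sq, real_inner_comm y g] at hsec
    linarith
  have hu : ‖y - α • g‖ ^ 2 = ‖y‖ ^ 2 - 2 * α * ⟪y, g⟫ + α ^ 2 * ‖g‖ ^ 2 := by
    rw [norm_sub_sq_real, real_inner_smul_right, norm_smul, mul_pow, Real.norm_eq_abs, sq_abs]
    ring
  have hexp : ‖y - α • (g + e)‖ ^ 2
      = ‖y - α • g‖ ^ 2 - 2 * α * ⟪y - α • g, e⟫ + α ^ 2 * ‖e‖ ^ 2 := by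
    rw [smul_add, ← sub_sub, norm_sub_sq_real (y - α • g), real_inner_smul_right, norm_smul,
      mul_pow, Real.norm_eq_abs, sq_abs]
    ring
  have hcs : -⟪y - α • g, e⟫ ≤ ‖y - α • g‖ * (δ * ‖g‖) :=
    (neg_le_abs _).trans ((abs_real_inner_le_norm _ _).trans
      (mul_le_mul_of_nonneg_left he (norm_nonneg _)))
  have he2 : ‖e‖ ^ 2 ≤ δ ^ 2 * ‖g‖ ^ 2 := by
    rw [← mul_pow]
    exact pow_le_pow_left₀ (norm_nonneg _) he 2
  generalize ‖y - α • g‖ = a at *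
  generalize ⟪y - α • g, e⟫ = p at *
  generalize ⟪y, g⟫ = q at *
  generalize ‖y - α • (g + e)‖ = w at *
  generalize ‖y‖ = Y at *
  generalize ‖g‖ = G at *
  generalize ‖e‖ = N at *
  -- Young's inequality, in a form that does not divide by the weight (which vanishes at `δ = 0`).
  have hyoung : 2 * α * (a * (δ * G)) ≤
      α * δ ^ 2 * (L + m) / (2 - α * (L + m)) * a ^ 2
        + α * (2 - α * (L + m)) / (L + m) * G ^ 2 := by
    have h : α * δ ^ 2 * (L + m) / (2 - α * (L + m)) * a ^ 2
        + α * (2 - α * (L + m)) / (L + m) * G ^ 2 - 2 * α * (a * (δ * G))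
        = α * (δ * (L + m) * a - (2 - α * (L + m)) * G) ^ 2
          / ((L + m) * (2 - α * (L + m))) := by
      field_simp
      ring
    have h0 : 0 ≤ α * (δ * (L + m) * a - (2 - α * (L + m)) * G) ^ 2
          / ((L + m) * (2 - α * (L + m))) := by positivity
    linarith
  have hsector : 2 * α / (L + m) * (1 + α * δ ^ 2 * (L + m) / (2 - α * (L + m))) *
      (L * m * Y ^ 2 - (L + m) * q + G ^ 2) ≤ 0 :=
    mul_nonpos_of_nonneg_of_nonpos (by positivity) hQ
  have hid : (1 + α * δ ^ 2 * (L + m) / (2 - α * (L + m))) * a ^ 2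
      + (α ^ 2 * δ ^ 2 + α * (2 - α * (L + m)) / (L + m)) * G ^ 2
      - (1 - 2 * α * L * m / (L + m) +
        α * δ ^ 2 * (L + m - 2 * α * L * m) / (2 - α * (L + m))) * Y ^ 2
      = 2 * α / (L + m) * (1 + α * δ ^ 2 * (L + m) / (2 - α * (L + m))) *
        (L * m * Y ^ 2 - (L + m) * q + G ^ 2) := by
    rw [hu]
    field_simp
    ring
  have h1 := mul_le_mul_of_nonneg_left hcs (by positivity : 0 ≤ 2 * α)
  have h2 := mul_le_mul_of_nonneg_left he2 (sq_nonneg α)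
  linarith

/-- **Proposition 2 (inexact gradient descent over `S(m,L)`, general rate).**
Let `0 < m < L`, `0 < α < 2/(L+m)`, `δ ∈ [0,1)` and
`ρ ≥ sqrt (1 - 2αLm/(L+m) + αδ²(L+m-2αLm)/(2-α(L+m)))`.  Then there is `c > 0` such that for
every `f ∈ S(m,L)` with reference point `x⋆`, every noise sequence `e` with
`|e k| ≤ δ |∇f (x k)|`, and every sequence of inexact gradient descent iterates
`x (k+1) = x k - α (∇f (x k) + e k)`, one has `|x k - x⋆| ≤ c ρ^k |x 0 - x⋆|`. -/
theorem stmt_1 (n : ℕ) (m L α δ ρ : ℝ)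
    (hm : 0 < m) (hmL : m < L) (hα : 0 < α) (hα2 : α < 2 / (L + m))
    (hδ0 : 0 ≤ δ) (hδ1 : δ < 1)
    (hρ : Real.sqrt (1 - 2 * α * L * m / (L + m) +
            α * δ ^ 2 * (L + m - 2 * α * L * m) / (2 - α * (L + m))) ≤ ρ) :
    ∃ c > 0, ∀ (f : EuclideanSpace ℝ (Fin n) → ℝ) (xs : EuclideanSpace ℝ (Fin n)),
      ContDiff ℝ 1 f →
      (∀ x : EuclideanSpace ℝ (Fin n),
        ⟪m • (x - xs) - gradient f x, L • (x - xs) - gradient f x⟫ ≤ 0) →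
      ∀ (x e : ℕ → EuclideanSpace ℝ (Fin n)),
        (∀ k, ‖e k‖ ≤ δ * ‖gradient f (x k)‖) →
        (∀ k, x (k + 1) = x k - α • (gradient f (x k) + e k)) →
        ∀ k, ‖x k - xs‖ ≤ c * ρ ^ k * ‖x 0 - xs‖ := by
  have hS : 0 < L + m := by linarith
  have hD : 0 < 2 - α * (L + m) := by
    rw [lt_div_iff₀ hS] at hα2
    linarith
  have hρ0 : 0 ≤ ρ := (Real.sqrt_nonneg _).trans hρ
  refine ⟨1, one_pos, fun f xs _ hsec x e he hx k => ?_⟩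
  induction k with
  | zero => simp
  | succ k ih =>
    have hstep := inexact_step hS hα hD (x k - xs) _ (e k) (hsec (x k)) (he k)
    have hnext : x (k + 1) - xs = x k - xs - α • (gradient f (x k) + e k) := by
      rw [hx k]
      abel
    rw [← hnext] at hstep
    have h := Real.le_sqrt_of_sq_le hstep
    rw [Real.sqrt_mul' _ (sq_nonneg _), Real.sqrt_sq (norm_nonneg _)] at h
    calc ‖x (k + 1) - xs‖ ≤ ρ * ‖x k - xs‖ :=
          h.trans (mul_le_mul_of_nonneg_right hρ (norm_nonneg _))
      _ ≤ ρ * (1 * ρ ^ k * ‖x 0 - xs‖) := mul_le_mul_of_nonneg_left ih hρ0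
      _ = 1 * ρ ^ (k + 1) * ‖x 0 - xs‖ := by ring
end

section
/- Let 0 < m < L and δ ∈ [0,1). Suppose the step size satisfies 1/L ≤ α ≤ 2/((1+δ)L + (1−δ)m), and let ρ ≥ ρ_GD(δ) = max(1−(1−δ)αm, (1+δ)αL−1). Then there exists c > 0 such that for every f ∈ F(m,L) with minimizer x⋆, every sequence e : ℕ → ℝⁿ with |e(k)| ≤ δ|∇f(x(k))| for all k, and every sequence x : ℕ → ℝⁿ satisfying x(k+1) = x(k) − α(∇f(x(k)) + e(k)) for all k, one has |x(k) − x⋆| ≤ c ρᵏ |x(0) − x⋆| for all k ≥ 0. -/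
open RealInnerProductSpace

/-! The suboptimality gap `f (x k) - f xs` contracts by `r ^ 2` in each step, where
`r = 1 - (1 - δ) α m` is the larger term of the maximum. The distance to the minimizer need not
contract in one step, but the gap lies between `m / 2 * ‖x - xs‖ ^ 2` and `L / 2 * ‖x - xs‖ ^ 2`,
so the claim follows with `c = √(L / m)`.

The one-step contraction combines the interpolation inequality for `m`-strongly convex,
`L`-smooth functions (`interpolation`) at the pairs `(x₀, x₁)`, `(xs, x₀)`, `(xs, x₁)` with weights
`r`, `r (1 - r)`, `1 - r`, and the noise bound `‖e‖² ≤ δ² ‖∇f x₀‖²` with a weight proportional to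
`α (L - m) r / δ`. With `d = x₀ - xs`, `u = ∇f x₀ - m d` and `w = (x₁ - xs) - r d`, what is left over
is a perfect square plus a quadratic form in `(w, u)`; the upper bound on `α` makes the
discriminant of that form nonpositive (`step_algebra`). -/

section Interpolation

variable {E : Type*} [NormedAddCommGroup E] [InnerProductSpace ℝ E] [CompleteSpace E]

theorem hasDerivAt_line {f : E → ℝ} (hf : Differentiable ℝ f) (x v : E) (t : ℝ) :
    HasDerivAt (fun s : ℝ => f (x + s • v)) ⟪gradient f (x + t • v), v⟫ t := by
  have h1 : HasDerivAt (fun s : ℝ => x + s • v) v t := by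
    simpa using ((hasDerivAt_id t).smul_const v).const_add x
  have h2 := ((hf (x + t • v)).hasGradientAt.hasFDerivAt).comp_hasDerivAt t h1
  rw [InnerProductSpace.toDual_apply_apply] at h2
  exact h2

theorem descent {f : E → ℝ} {L : ℝ} (hf : Differentiable ℝ f)
    (hL : ∀ x y, ‖gradient f x - gradient f y‖ ≤ L * ‖x - y‖) (x v : E) :
    f (x + v) ≤ f x + ⟪gradient f x, v⟫ + L / 2 * ‖v‖ ^ 2 := by
  have hd : ∀ t : ℝ, HasDerivAt
      (fun s : ℝ => f (x + s • v) - s * ⟪gradient f x, v⟫ - L / 2 * ‖v‖ ^ 2 * s ^ 2)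
      (⟪gradient f (x + t • v), v⟫ - ⟪gradient f x, v⟫ - L * ‖v‖ ^ 2 * t) t := by
    intro t
    have h := ((hasDerivAt_line hf x v t).sub
      ((hasDerivAt_id t).mul_const ⟪gradient f x, v⟫)).sub
      (((hasDerivAt_id t).pow 2).const_mul (L / 2 * ‖v‖ ^ 2))
    refine (h.congr_deriv ?_)
    simp
    ring
  have hanti : AntitoneOn
      (fun s : ℝ => f (x + s • v) - s * ⟪gradient f x, v⟫ - L / 2 * ‖v‖ ^ 2 * s ^ 2)
      (Set.Icc 0 1) := by
    refine antitoneOn_of_deriv_nonpos (convex_Icc 0 1)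
      (fun t _ => (hd t).continuousAt.continuousWithinAt)
      (fun t _ => (hd t).differentiableAt.differentiableWithinAt) ?_
    intro t ht
    rw [interior_Icc] at ht
    rw [(hd t).deriv, ← inner_sub_left]
    have h1 := real_inner_le_norm (gradient f (x + t • v) - gradient f x) v
    have h2 := hL (x + t • v) x
    rw [add_sub_cancel_left, norm_smul, Real.norm_of_nonneg ht.1.le] at h2
    nlinarith [mul_le_mul_of_nonneg_right h2 (norm_nonneg v)]
  have h := hanti (Set.left_mem_Icc.2 zero_le_one) (Set.right_mem_Icc.2 zero_le_one) zero_le_one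
  simp [-inner_gradient_left] at h
  linarith

theorem strong_lower {f : E → ℝ} {m : ℝ} (hf : Differentiable ℝ f)
    (hc : ConvexOn ℝ Set.univ (fun x => f x - m / 2 * ‖x‖ ^ 2)) (x v : E) :
    f x + ⟪gradient f x, v⟫ + m / 2 * ‖v‖ ^ 2 ≤ f (x + v) := by
  have hcl : ConvexOn ℝ Set.univ (fun s : ℝ => f (x + s • v) - m / 2 * ‖x + s • v‖ ^ 2) := by
    have h := hc.comp_affineMap (AffineMap.lineMap x (x + v) : ℝ →ᵃ[ℝ] E)
    have he : (fun x => f x - m / 2 * ‖x‖ ^ 2) ∘ (AffineMap.lineMap x (x + v) : ℝ →ᵃ[ℝ] E)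
        = fun s : ℝ => f (x + s • v) - m / 2 * ‖x + s • v‖ ^ 2 := by
      funext s
      simp [AffineMap.lineMap_apply, add_comm]
    rw [he] at h
    simpa using h
  have hexp : ∀ s : ℝ, ‖x + s • v‖ ^ 2 = ‖x‖ ^ 2 + s * (2 * ⟪x, v⟫) + ‖v‖ ^ 2 * s ^ 2 := by
    intro s
    rw [norm_add_sq_real, norm_smul, inner_smul_right, mul_pow, Real.norm_eq_abs, sq_abs]
    ring
  have hd : HasDerivAt (fun s : ℝ => f (x + s • v) - m / 2 * ‖x + s • v‖ ^ 2)
      (⟪gradient f x, v⟫ - m * ⟪x, v⟫) 0 := by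
    have h := (hasDerivAt_line hf x v 0).sub
      ((((hasDerivAt_const (0 : ℝ) (‖x‖ ^ 2)).add
      ((hasDerivAt_id (0 : ℝ)).mul_const (2 * ⟪x, v⟫))).add
      (((hasDerivAt_id (0 : ℝ)).pow 2).const_mul (‖v‖ ^ 2))).const_mul (m / 2))
    simp only [hexp]
    refine (h.congr_deriv ?_)
    simp
    ring
  have h := hcl.le_slope_of_hasDerivAt (Set.mem_univ 0) (Set.mem_univ 1) zero_lt_one hd
  have h1 := hexp 1
  simp [slope_def_field, -inner_gradient_left] at h h1
  rw [h1] at h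
  linarith

/-- Interpolation inequality for `m`-strongly convex functions with `L`-Lipschitz gradient,
cleared of denominators. It compares the lower bound based at `y` with the upper bound based at `x`,
both evaluated at the minimizer over `z` of their difference. -/
theorem interpolation {f : E → ℝ} {m L : ℝ} (hmL : m < L) (hf : Differentiable ℝ f)
    (hc : ConvexOn ℝ Set.univ (fun x => f x - m / 2 * ‖x‖ ^ 2))
    (hL : ∀ x y, ‖gradient f x - gradient f y‖ ≤ L * ‖x - y‖) (x y : E) :
    2 * (L - m) * f y + 2 * (L - m) * ⟪gradient f y, x - y⟫ + (L - m) * m * ‖x - y‖ ^ 2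
      + ‖(gradient f x - gradient f y) - m • (x - y)‖ ^ 2 ≤ 2 * (L - m) * f x := by
  have hM : 0 < L - m := sub_pos.2 hmL
  obtain ⟨p, hp⟩ : ∃ p : E, p = (gradient f x - gradient f y) - m • (x - y) := ⟨_, rfl⟩
  have hg : gradient f x = gradient f y + m • (x - y) + p := by rw [hp]; abel
  obtain ⟨κ, hκ⟩ : ∃ κ : ℝ, κ = (L - m)⁻¹ := ⟨_, rfl⟩
  have hκ1 : (L - m) * κ = 1 := by rw [hκ]; exact mul_inv_cancel₀ hM.ne'
  have h1 := descent hf hL x (-(κ • p))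
  have h2 := strong_lower hf hc y ((x - y) + -(κ • p))
  have hz : y + ((x - y) + -(κ • p)) = x + -(κ • p) := by abel
  rw [hz] at h2
  rw [← hp]
  rw [hg] at h1
  obtain ⟨s, hs⟩ : ∃ s : E, s = x - y := ⟨_, rfl⟩
  rw [← hs] at h1 h2 ⊢
  simp only [← real_inner_self_eq_norm_sq, inner_add_left, inner_add_right, inner_neg_left,
    inner_neg_right, real_inner_smul_left, real_inner_smul_right, real_inner_comm s p] at h1 h2 ⊢
  have h3 := mul_le_mul_of_nonneg_left (h2.trans h1) (mul_nonneg zero_le_two hM.le)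
  linear_combination h3 + (⟪p, p⟫ * ((L - m) * κ - 1)) * hκ1
end Interpolation

section Algebra

variable {E : Type*} [NormedAddCommGroup E] [InnerProductSpace ℝ E]

theorem form_nonneg {A B C : ℝ} (hC : 0 < C) (hB : B ^ 2 ≤ 4 * A * C) (w u : E) :
    0 ≤ A * ⟪w, w⟫ + B * ⟪w, u⟫ + C * ⟪u, u⟫ := by
  have h1 : 0 ≤ ⟪B • w + (2 * C) • u, B • w + (2 * C) • u⟫ := real_inner_self_nonneg
  have h2 : 0 ≤ (4 * A * C - B ^ 2) * ⟪w, w⟫ :=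
    mul_nonneg (sub_nonneg.2 hB) real_inner_self_nonneg
  simp only [inner_add_left, inner_add_right, real_inner_smul_left, real_inner_smul_right,
    real_inner_comm w u] at h1
  refine nonneg_of_mul_nonneg_right (a := 4 * C) ?_ (by positivity)
  linarith

/-- One-step contraction of the gap, as a statement about vectors. Here `d = x₀ - xs`, the gradient
at `x₀` is `u + m d`, the gradient at `x₁` is `u₁ + m d₁`, and `F₀`, `F₁` are the gaps. -/
theorem step_algebra {m L α δ r F₀ F₁ : ℝ} {d u e u₁ d₁ : E}
    (hm : 0 < m) (hmL : m < L) (hα : 0 < α) (hδ0 : 0 ≤ δ) (hδ1 : δ < 1)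
    (hr : r = 1 - (1 - δ) * (α * m))
    (hα2 : (1 + δ) * (α * L) + (1 - δ) * (α * m) ≤ 2)
    (hd₁ : d₁ = d - α • (u + m • d + e))
    (he : ‖e‖ ^ 2 ≤ δ ^ 2 * ‖u + m • d‖ ^ 2)
    (h01 : 2 * (L - m) * F₁ + 2 * (L - m) * ⟪u₁ + m • d₁, d - d₁⟫
      + (L - m) * m * ‖d - d₁‖ ^ 2 + ‖u - u₁‖ ^ 2 ≤ 2 * (L - m) * F₀)
    (hs0 : 2 * (L - m) * F₀ - 2 * (L - m) * ⟪u + m • d, d⟫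
      + (L - m) * m * ‖d‖ ^ 2 + ‖u‖ ^ 2 ≤ 0)
    (hs1 : 2 * (L - m) * F₁ - 2 * (L - m) * ⟪u₁ + m • d₁, d₁⟫
      + (L - m) * m * ‖d₁‖ ^ 2 + ‖u₁‖ ^ 2 ≤ 0) :
    F₁ ≤ r ^ 2 * F₀ := by
  have hM : 0 < L - m := sub_pos.2 hmL
  have hαm : 0 < α * m := mul_pos hα hm
  have hαL : α * m < α * L := mul_lt_mul_of_pos_left hmL hα
  have h2r : (1 + δ) * (α * L) - (1 - δ) * (α * m) ≤ 2 * r := by rw [hr]; linarith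
  have hr0 : 0 < r := by nlinarith [mul_nonneg hδ0 hαm.le, mul_nonneg hδ0 (hαm.trans hαL).le]
  have hr1 : 0 ≤ 1 - r := by
    rw [hr]; nlinarith [mul_nonneg (sub_nonneg.2 hδ1.le) hαm.le]
  have k1 := mul_le_mul_of_nonneg_left h01 hr0.le
  have k2 := mul_le_mul_of_nonneg_left hs0 (mul_nonneg hr0.le hr1)
  have k3 := mul_le_mul_of_nonneg_left hs1 hr1
  obtain ⟨w, hw⟩ : ∃ w : E, w = d₁ - r • d := ⟨_, rfl⟩
  have k4 : 0 ≤ ⟪u₁ - ((L - m) • w + r • u), u₁ - ((L - m) • w + r • u)⟫ :=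
    real_inner_self_nonneg
  refine le_of_mul_le_mul_left ?_ (mul_pos zero_lt_two hM)
  rcases hδ0.eq_or_lt with h0 | hδ
  -- Exact gradients: `w = -α u`, and the quadratic form degenerates to a multiple of `‖u‖²`.
  · subst h0
    have he0 : e = 0 := by
      have : ‖e‖ ^ 2 ≤ 0 := by simpa using he
      exact norm_eq_zero.1 (pow_eq_zero_iff two_ne_zero |>.1 (le_antisymm this (sq_nonneg _)))
    have k5 : 0 ≤ (2 * r - (α * L - α * m)) * (α * L) * ⟪u, u⟫ := by
      have : 0 ≤ 2 * r - (α * L - α * m) := by linarith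
      have := (hαm.trans hαL).le
      have := real_inner_self_nonneg (x := u)
      positivity
    subst hw hd₁ he0
    simp only [← real_inner_self_eq_norm_sq, inner_add_left, inner_add_right, inner_sub_left,
      inner_sub_right, real_inner_smul_left, real_inner_smul_right, real_inner_comm d u,
      real_inner_comm d u₁, real_inner_comm u u₁, inner_zero_left, inner_zero_right] at *
    subst hr
    linear_combination k1 + k2 + k3 + k4 + k5
  · have hK : 0 < (1 + δ) * L - (1 - δ) * m := by
      nlinarith [mul_pos hδ hm, mul_pos hδ (hm.trans hmL)]
    have hC : 0 < r * α ^ 2 * (1 - δ) * ((1 + δ) * L - (1 - δ) * m) := by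
      have := sub_pos.2 hδ1
      positivity
    have hB : (2 * α * (L - m) * r * (1 - δ)) ^ 2 ≤ 4 * ((L - m) * (r - α * δ * L)) *
        (r * α ^ 2 * (1 - δ) * ((1 + δ) * L - (1 - δ) * m)) := by
      have h1 : 0 ≤ 4 * (L - m) * r * α ^ 2 * (1 - δ) * (δ * L) *
          (2 * r - ((1 + δ) * (α * L) - (1 - δ) * (α * m))) := by
        have := sub_pos.2 hδ1
        have := hm.trans hmL
        have := sub_nonneg.2 h2r
        positivity
      linear_combination h1
    have k5 := form_nonneg (A := (L - m) * (r - α * δ * L))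
      (B := 2 * α * (L - m) * r * (1 - δ))
      (C := r * α ^ 2 * (1 - δ) * ((1 + δ) * L - (1 - δ) * m)) hC hB w u
    have k6 := mul_le_mul_of_nonneg_left he (mul_nonneg (mul_nonneg hα.le hM.le) hr0.le)
    refine le_of_mul_le_mul_left ?_ (mul_pos hα hδ)
    replace k1 := mul_le_mul_of_nonneg_left k1 (mul_pos hα hδ).le
    replace k2 := mul_le_mul_of_nonneg_left k2 (mul_pos hα hδ).le
    replace k3 := mul_le_mul_of_nonneg_left k3 (mul_pos hα hδ).le
    replace k4 := mul_le_mul_of_nonneg_left k4 (mul_pos hα hδ).le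
    subst hw hd₁
    simp only [← real_inner_self_eq_norm_sq, inner_add_left, inner_add_right, inner_sub_left,
      inner_sub_right, real_inner_smul_left, real_inner_smul_right, real_inner_comm d u,
      real_inner_comm d u₁, real_inner_comm u u₁, real_inner_comm d e, real_inner_comm u e,
      real_inner_comm e u₁] at k1 k2 k3 k4 k5 k6
    subst hr
    linear_combination k1 + k2 + k3 + k4 + k5 + α * k6

end Algebra

/-- **Proposition 3 (inexact gradient descent over `F(m,L)`).**
Let `0 < m < L`, `δ ∈ [0,1)`, `1/L ≤ α ≤ 2/((1+δ)L + (1-δ)m)` and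
`ρ ≥ ρ_GD(δ) = max (1-(1-δ)αm) ((1+δ)αL-1)`.  Then there is `c > 0` such that for every
`m`-strongly convex `f` with `L`-Lipschitz gradient and minimizer `x⋆`, every noise sequence
`e` with `|e k| ≤ δ |∇f (x k)|`, and every sequence of inexact gradient descent iterates
`x (k+1) = x k - α (∇f (x k) + e k)`, one has `|x k - x⋆| ≤ c ρ^k |x 0 - x⋆|`. -/
theorem stmt_2 (n : ℕ) (m L α δ ρ : ℝ)
    (hm : 0 < m) (hmL : m < L)
    (hδ0 : 0 ≤ δ) (hδ1 : δ < 1)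
    (hα1 : 1 / L ≤ α) (hα2 : α ≤ 2 / ((1 + δ) * L + (1 - δ) * m))
    (hρ : max (1 - (1 - δ) * (α * m)) ((1 + δ) * (α * L) - 1) ≤ ρ) :
    ∃ c > 0, ∀ (f : EuclideanSpace ℝ (Fin n) → ℝ) (xs : EuclideanSpace ℝ (Fin n)),
      ContDiff ℝ 1 f →
      ConvexOn ℝ Set.univ (fun x : EuclideanSpace ℝ (Fin n) => f x - m / 2 * ‖x‖ ^ 2) →
      (∀ x y : EuclideanSpace ℝ (Fin n), ‖gradient f x - gradient f y‖ ≤ L * ‖x - y‖) →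
      (∀ y : EuclideanSpace ℝ (Fin n), f xs ≤ f y) →
      ∀ (x e : ℕ → EuclideanSpace ℝ (Fin n)),
        (∀ k, ‖e k‖ ≤ δ * ‖gradient f (x k)‖) →
        (∀ k, x (k + 1) = x k - α • (gradient f (x k) + e k)) →
        ∀ k, ‖x k - xs‖ ≤ c * ρ ^ k * ‖x 0 - xs‖ := by
  have hL0 : 0 < L := hm.trans hmL
  have hα : 0 < α := lt_of_lt_of_le (by positivity) hα1
  have hden : 0 < (1 + δ) * L + (1 - δ) * m := by
    have := sub_pos.2 hδ1
    positivity
  have hα2' : (1 + δ) * (α * L) + (1 - δ) * (α * m) ≤ 2 := by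
    have := (le_div_iff₀ hden).1 hα2
    linarith
  obtain ⟨r, hr⟩ : ∃ r : ℝ, r = 1 - (1 - δ) * (α * m) := ⟨_, rfl⟩
  have hr0 : 0 ≤ r := by
    have h1 : 1 ≤ α * L := (div_le_iff₀ hL0).1 hα1
    rw [hr]
    nlinarith [mul_le_mul_of_nonneg_left h1 (by linarith : 0 ≤ 1 + δ)]
  have hrρ : r ≤ ρ := hr ▸ (le_max_left _ _).trans hρ
  refine ⟨√(L / m), by positivity, ?_⟩
  intro f xs hf hc hL hmin x e he hx k
  have hfd : Differentiable ℝ f := hf.differentiable one_ne_zero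
  have hgs : gradient f xs = 0 := by
    have h : IsLocalMin f xs := Filter.Eventually.of_forall hmin
    simp [gradient, h.fderiv_eq_zero]
  have hstep : ∀ j, f (x (j + 1)) - f xs ≤ r ^ 2 * (f (x j) - f xs) := by
    intro j
    have h01 := interpolation hmL hfd hc hL (x j) (x (j + 1))
    have hs0 := interpolation hmL hfd hc hL xs (x j)
    have hs1 := interpolation hmL hfd hc hL xs (x (j + 1))
    refine step_algebra (d := x j - xs) (u := gradient f (x j) - m • (x j - xs)) (e := e j)
      (u₁ := gradient f (x (j + 1)) - m • (x (j + 1) - xs)) (d₁ := x (j + 1) - xs)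
      hm hmL hα hδ0 hδ1 hr hα2' ?_ ?_ ?_ ?_ ?_
    · rw [hx j, sub_add_cancel]
      abel
    · rw [sub_add_cancel, ← mul_pow]
      exact pow_le_pow_left₀ (norm_nonneg _) (he j) 2
    · rw [sub_add_cancel, sub_sub_sub_cancel_right]
      have : gradient f (x j) - m • (x j - xs)
          - (gradient f (x (j + 1)) - m • (x (j + 1) - xs))
          = gradient f (x j) - gradient f (x (j + 1)) - m • (x j - x (j + 1)) := by
        module
      rw [this]
      linarith
    · rw [sub_add_cancel]
      have : gradient f xs - gradient f (x j) - m • (xs - x j)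
          = -(gradient f (x j) - m • (x j - xs)) := by
        rw [hgs]; module
      rw [this, norm_neg, ← neg_sub (x j) xs, inner_neg_right, norm_neg] at hs0
      linarith
    · rw [sub_add_cancel]
      have : gradient f xs - gradient f (x (j + 1)) - m • (xs - x (j + 1))
          = -(gradient f (x (j + 1)) - m • (x (j + 1) - xs)) := by
        rw [hgs]; module
      rw [this, norm_neg, ← neg_sub (x (j + 1)) xs, inner_neg_right, norm_neg] at hs1
      linarith
  have hgap : ∀ j, f (x j) - f xs ≤ (r ^ 2) ^ j * (f (x 0) - f xs) := by
    intro j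
    induction j with
    | zero => simp
    | succ j ih =>
      calc f (x (j + 1)) - f xs ≤ r ^ 2 * (f (x j) - f xs) := hstep j
        _ ≤ r ^ 2 * ((r ^ 2) ^ j * (f (x 0) - f xs)) := by gcongr
        _ = (r ^ 2) ^ (j + 1) * (f (x 0) - f xs) := by ring
  have hlow := strong_lower hfd hc xs (x k - xs)
  have hup := descent hfd hL xs (x 0 - xs)
  rw [hgs, inner_zero_left, add_sub_cancel] at hlow hup
  have hsq : ‖x k - xs‖ ^ 2 ≤ (√(L / m) * r ^ k * ‖x 0 - xs‖) ^ 2 := by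
    have h1 : m / 2 * ‖x k - xs‖ ^ 2 ≤ (r ^ 2) ^ k * (L / 2 * ‖x 0 - xs‖ ^ 2) :=
      calc m / 2 * ‖x k - xs‖ ^ 2 ≤ f (x k) - f xs := by linarith
        _ ≤ (r ^ 2) ^ k * (f (x 0) - f xs) := hgap k
        _ ≤ (r ^ 2) ^ k * (L / 2 * ‖x 0 - xs‖ ^ 2) := by gcongr; linarith
    rw [mul_pow, mul_pow, Real.sq_sqrt (by positivity), ← pow_mul, mul_comm k 2, pow_mul]
    refine le_of_mul_le_mul_left (h1.trans_eq ?_) (half_pos hm)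
    field_simp
  calc ‖x k - xs‖ ≤ √(L / m) * r ^ k * ‖x 0 - xs‖ := abs_le_of_sq_le_sq' hsq (by positivity) |>.2
    _ ≤ √(L / m) * ρ ^ k * ‖x 0 - xs‖ := by gcongr
end

section
/- Let 0 < m < L, δ ∈ [0,1), and α > 0, and set ρ_GD(δ) = max(1−(1−δ)αm, (1+δ)αL−1). Suppose ρ > 0 and c > 0 are such that for every f ∈ S(m,L) with reference point x⋆, every sequence e with |e(k)| ≤ δ|∇f(x(k))|, and every sequence x with x(k+1) = x(k) − α(∇f(x(k)) + e(k)), one has |x(k) − x⋆| ≤ c ρᵏ |x(0) − x⋆| for all k. Then ρ ≥ ρ_GD(δ). (In particular, choosing f(x) = (k̄/2)|x|² for k̄ ∈ {m, L} and e = ±δ∇f(x) realizes gradient descent with step sizes (1±δ)α, forcing this lower bound.) -/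
/-!
On the quadratic `f x = (κ/2) ‖x‖²` with `κ ∈ {m, L}` and reference point `0`, the gradient is `κ • x`,
and the admissible noise `e k = s • ∇f (x k)` with `|s| ≤ δ` turns the iteration into
multiplication by the scalar `q = 1 - α (1 + s) κ`. Starting from a unit vector, the assumed bound
reads `|q| ^ k ≤ c * ρ ^ k` for all `k`, which forces `|q| ≤ ρ` (`le_of_forall_pow_le`).
Taking `(κ, s) = (m, -δ)` and `(κ, s) = (L, δ)` gives the two terms of the maximum.
-/

open RealInnerProductSpace

/-- Otherwise `(a / ρ) ^ k` would be unbounded in `k`. -/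
lemma le_of_forall_pow_le {a ρ c : ℝ} (hρ : 0 < ρ) (h : ∀ k : ℕ, a ^ k ≤ c * ρ ^ k) :
    a ≤ ρ := by
  by_contra! hlt
  obtain ⟨k, hk⟩ := pow_unbounded_of_one_lt c ((one_lt_div hρ).2 hlt)
  rw [div_pow, lt_div_iff₀ (pow_pos hρ k)] at hk
  exact absurd (h k) (not_le.2 hk)

lemma gradient_half_mul_norm_sq {E : Type*} [NormedAddCommGroup E] [InnerProductSpace ℝ E]
    [CompleteSpace E] (κ : ℝ) (x : E) :
    gradient (fun y : E => κ / 2 * ‖y‖ ^ 2) x = κ • x := by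
  apply HasGradientAt.gradient
  rw [hasGradientAt_iff_hasFDerivAt]
  refine ((hasStrictFDerivAt_norm_sq x).hasFDerivAt.const_mul (κ / 2)).congr_fderiv ?_
  ext y
  simp
  ring

/-- **Lower bound `ρ ≥ ρ_GD(δ)` for inexact gradient descent over `S(m,L)`.**
Let `0 < m < L`, `δ ∈ [0,1)` and `α > 0`, and suppose `ρ > 0`, `c > 0` are such that for every
`f ∈ S(m,L)` (on `ℝⁿ` with `n ≥ 1`) with reference point `x⋆`, every noise sequence `e` with
`|e k| ≤ δ |∇f (x k)|`, and every sequence of iterates `x (k+1) = x k - α (∇f (x k) + e k)`,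
one has `|x k - x⋆| ≤ c ρ^k |x 0 - x⋆|` for all `k`.  Then
`ρ ≥ ρ_GD(δ) = max (1-(1-δ)αm) ((1+δ)αL-1)`. -/
theorem stmt_3 (n : ℕ) (hn : 0 < n) (m L α δ ρ c : ℝ)
    (hm : 0 < m) (hmL : m < L) (hα : 0 < α)
    (hδ0 : 0 ≤ δ) (hδ1 : δ < 1)
    (hρ : 0 < ρ) (hc : 0 < c)
    (hbound : ∀ (f : EuclideanSpace ℝ (Fin n) → ℝ) (xs : EuclideanSpace ℝ (Fin n)),
      ContDiff ℝ 1 f →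
      (∀ x : EuclideanSpace ℝ (Fin n),
        ⟪m • (x - xs) - gradient f x, L • (x - xs) - gradient f x⟫ ≤ 0) →
      ∀ (x e : ℕ → EuclideanSpace ℝ (Fin n)),
        (∀ k, ‖e k‖ ≤ δ * ‖gradient f (x k)‖) →
        (∀ k, x (k + 1) = x k - α • (gradient f (x k) + e k)) →
        ∀ k, ‖x k - xs‖ ≤ c * ρ ^ k * ‖x 0 - xs‖) :
    max (1 - (1 - δ) * (α * m)) ((1 + δ) * (α * L) - 1) ≤ ρ := by
  have : Nonempty (Fin n) := ⟨⟨0, hn⟩⟩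
  obtain ⟨v, hv⟩ := exists_norm_eq (EuclideanSpace ℝ (Fin n)) zero_le_one
  have key : ∀ κ s : ℝ, (m - κ) * (L - κ) ≤ 0 → |s| ≤ δ → |1 - α * (1 + s) * κ| ≤ ρ := by
    intro κ s hκ hs
    refine le_of_forall_pow_le (c := c) hρ fun k => ?_
    have h := hbound (fun y => κ / 2 * ‖y‖ ^ 2) 0
      (contDiff_const.mul (contDiff_norm_sq ℝ)) ?_
      (fun k => (1 - α * (1 + s) * κ) ^ k • v)
      (fun k => s • κ • (1 - α * (1 + s) * κ) ^ k • v) ?_ ?_ k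
    · simpa [norm_smul, hv] using h
    · intro x
      rw [gradient_half_mul_norm_sq, sub_zero, ← sub_smul, ← sub_smul, real_inner_smul_left,
        real_inner_smul_right, ← mul_assoc]
      exact mul_nonpos_of_nonpos_of_nonneg hκ real_inner_self_nonneg
    · intro k
      rw [gradient_half_mul_norm_sq, norm_smul s, Real.norm_eq_abs]
      gcongr
    · intro k
      rw [gradient_half_mul_norm_sq]
      module
  refine max_le ?_ ?_
  · have h := (le_abs_self _).trans (key m (-δ) (by simp) (by rw [abs_neg, abs_of_nonneg hδ0]))
    linarith
  · have h := (neg_le_abs _).trans (key L δ (by simp) (abs_of_nonneg hδ0).le)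
    linarith
end

section
/- Let A ∈ ℝ^{d×d}, B ∈ ℝ^{d×n}, let M ∈ ℝ^{(d+n)×(d+n)} be symmetric with block decomposition M = [[Q, Sᵀ],[S, R]], and let ρ > 0. If there exist N ∈ ℝ^{n×d} and ε ≥ 0 with ε‖R‖ ≤ 2 (‖·‖ the operator norm) such that the matrix A + B(I + εR)N + εBS is ρ-Schur and Q + SᵀN + NᵀS + NᵀRN is positive semidefinite, then the triple (A,B,M) is ρ-minimally stable. -/
/-!
Close the loop with the linear feedback `u = N x + ε (S + R N) x`. The state matrix becomes
`F = A + B (1 + ε R) N + ε B S`, so `x k = F ^ k x₀`, and `ρ⁻ᵏ F ^ k → 0` because the spectral radius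
of `F` is below `ρ` (Gelfand's formula, `tendsto_of_isSchur`).

Put `v = (S + R N) x`, so that `u = N x + ε v`. Since `R` is symmetric, the quadratic form at `(x, u)`
equals `⟨(Q + Sᵀ N + Nᵀ S + Nᵀ R N) x, x⟩ + 2 ε ‖v‖² + ε² ⟨R v, v⟩`. The first term is nonnegative by
hypothesis, and `ε ‖R‖ ≤ 2` makes the other two add up to something nonnegative. Hence every summand
of the integral quadratic constraint is nonnegative (`feedback_form_nonneg`).
-/

open Matrix Filter RealInnerProductSpace


/-- The action of a real matrix on Euclidean space. -/
noncomputable def mulVecE {ι κ : Type*} [Fintype ι] [Fintype κ] [DecidableEq κ]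
    (A : Matrix ι κ ℝ) (v : EuclideanSpace ℝ κ) : EuclideanSpace ℝ ι :=
  Matrix.toEuclideanLin A v

/-- `(x,u) ∈ B(A,B)`: trajectories of the LTI system `x(k+1) = A x(k) + B u(k)`. -/
def IsTraj {ι κ : Type*} [Fintype ι] [Fintype κ] [DecidableEq ι] [DecidableEq κ]
    (A : Matrix ι ι ℝ) (B : Matrix ι κ ℝ)
    (x : ℕ → EuclideanSpace ℝ ι) (u : ℕ → EuclideanSpace ℝ κ) : Prop :=
  ∀ k, x (k + 1) = mulVecE A (x k) + mulVecE B (u k)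

/-- `(x,u) ∈ IQC(M,ρ)` for `M = [[Q, Sᵀ],[S, R]]`: the hard ρ-integral quadratic constraint. -/
def SatIQC {ι κ : Type*} [Fintype ι] [Fintype κ] [DecidableEq ι] [DecidableEq κ]
    (Q : Matrix ι ι ℝ) (S : Matrix κ ι ℝ) (R : Matrix κ κ ℝ) (ρ : ℝ)
    (x : ℕ → EuclideanSpace ℝ ι) (u : ℕ → EuclideanSpace ℝ κ) : Prop :=
  ∀ N : ℕ, 0 ≤ ∑ k ∈ Finset.range (N + 1), (ρ ^ (2 * k))⁻¹ *
    (⟪mulVecE Q (x k), x k⟫ + 2 * ⟪mulVecE S (x k), u k⟫ + ⟪mulVecE R (u k), u k⟫)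

/-- The triple `(A,B,M)`, `M = [[Q, Sᵀ],[S, R]]`, is ρ-hyperstable. -/
def Hyperstable {ι κ : Type*} [Fintype ι] [Fintype κ] [DecidableEq ι] [DecidableEq κ]
    (A : Matrix ι ι ℝ) (B : Matrix ι κ ℝ)
    (Q : Matrix ι ι ℝ) (S : Matrix κ ι ℝ) (R : Matrix κ κ ℝ) (ρ : ℝ) : Prop :=
  ∃ c > 0, ∀ (x : ℕ → EuclideanSpace ℝ ι) (u : ℕ → EuclideanSpace ℝ κ),
    IsTraj A B x u → SatIQC Q S R ρ x u → ∀ k, ‖x k‖ ≤ c * ρ ^ k * ‖x 0‖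

/-- The triple `(A,B,M)`, `M = [[Q, Sᵀ],[S, R]]`, is ρ-minimally stable. -/
def MinStable {ι κ : Type*} [Fintype ι] [Fintype κ] [DecidableEq ι] [DecidableEq κ]
    (A : Matrix ι ι ℝ) (B : Matrix ι κ ℝ)
    (Q : Matrix ι ι ℝ) (S : Matrix κ ι ℝ) (R : Matrix κ κ ℝ) (ρ : ℝ) : Prop :=
  ∀ x₀ : EuclideanSpace ℝ ι, ∃ (x : ℕ → EuclideanSpace ℝ ι) (u : ℕ → EuclideanSpace ℝ κ),
    IsTraj A B x u ∧ SatIQC Q S R ρ x u ∧ x 0 = x₀ ∧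
    Tendsto (fun k => (ρ ^ k)⁻¹ • x k) atTop (nhds 0)

/-- A square real matrix is ρ-Schur if all its complex eigenvalues lie in the open disk of
radius ρ. -/
def IsSchur {ι : Type*} [Fintype ι] [DecidableEq ι] (ρ : ℝ) (A : Matrix ι ι ℝ) : Prop :=
  ∀ z ∈ spectrum ℂ (A.map (Complex.ofReal ·)), ‖z‖ < ρ

/-- The transfer function `H(z) = C (zI - A)⁻¹ B`. -/
noncomputable def transferH {d n : ℕ} (A : Matrix (Fin d) (Fin d) ℝ)
    (B : Matrix (Fin d) (Fin n) ℝ) (C : Matrix (Fin n) (Fin d) ℝ) (z : ℂ) :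
    Matrix (Fin n) (Fin n) ℂ :=
  (C.map (Complex.ofReal ·)) *
    (z • (1 : Matrix (Fin d) (Fin d) ℂ) - A.map (Complex.ofReal ·))⁻¹ *
    (B.map (Complex.ofReal ·))

section MulVecE

variable {ι κ μ : Type*} [Fintype ι] [Fintype κ] [Fintype μ]
  [DecidableEq κ] [DecidableEq μ]

lemma mulVecE_add_left (A C : Matrix ι κ ℝ) (v : EuclideanSpace ℝ κ) :
    mulVecE (A + C) v = mulVecE A v + mulVecE C v := by
  simp [mulVecE]

lemma mulVecE_smul_left (c : ℝ) (A : Matrix ι κ ℝ) (v : EuclideanSpace ℝ κ) :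
    mulVecE (c • A) v = c • mulVecE A v := by
  simp [mulVecE]

lemma mulVecE_add_right (A : Matrix ι κ ℝ) (v w : EuclideanSpace ℝ κ) :
    mulVecE A (v + w) = mulVecE A v + mulVecE A w := by
  simp [mulVecE]

lemma mulVecE_smul_right (A : Matrix ι κ ℝ) (c : ℝ) (v : EuclideanSpace ℝ κ) :
    mulVecE A (c • v) = c • mulVecE A v := by
  simp [mulVecE]

lemma mulVecE_one (v : EuclideanSpace ℝ κ) : mulVecE (1 : Matrix κ κ ℝ) v = v := by
  simp [mulVecE]

lemma mulVecE_mul (A : Matrix ι κ ℝ) (C : Matrix κ μ ℝ) (v : EuclideanSpace ℝ μ) :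
    mulVecE (A * C) v = mulVecE A (mulVecE C v) := by
  simp [mulVecE, Matrix.toLpLin_apply, Matrix.mulVec_mulVec]

lemma inner_mulVecE_transpose [DecidableEq ι] (A : Matrix ι κ ℝ) (y : EuclideanSpace ℝ ι)
    (x : EuclideanSpace ℝ κ) : ⟪mulVecE Aᵀ y, x⟫ = ⟪y, mulVecE A x⟫ := by
  simp only [mulVecE, Matrix.toLpLin_apply, EuclideanSpace.inner_eq_star_dotProduct,
    star_trivial]
  rw [dotProduct_comm, Matrix.mulVec_transpose, ← Matrix.dotProduct_mulVec, dotProduct_comm]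

lemma inner_mulVecE_self_nonneg [DecidableEq ι] {P : Matrix ι ι ℝ} (hP : P.PosSemidef)
    (x : EuclideanSpace ℝ ι) : 0 ≤ ⟪mulVecE P x, x⟫ := by
  have h := hP.dotProduct_mulVec_nonneg x.ofLp
  simpa [mulVecE, Matrix.toLpLin_apply, EuclideanSpace.inner_eq_star_dotProduct] using h

end MulVecE

/-- The role of the bound `ε ‖R‖ ≤ 2`: by Cauchy–Schwarz the term of order `ε ^ 2`, whatever its sign,
is dominated by the term of order `ε`. -/
lemma two_mul_norm_sq_add_nonneg {κ : Type*} [Fintype κ] [DecidableEq κ] (R : Matrix κ κ ℝ)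
    {ε : ℝ} (hε : 0 ≤ ε) (hεR : ε * ‖Matrix.toEuclideanCLM (𝕜 := ℝ) R‖ ≤ 2)
    (v : EuclideanSpace ℝ κ) : 0 ≤ 2 * ε * ⟪v, v⟫ + ε ^ 2 * ⟪mulVecE R v, v⟫ := by
  have h1 : ‖mulVecE R v‖ ≤ ‖Matrix.toEuclideanCLM (𝕜 := ℝ) R‖ * ‖v‖ :=
    (Matrix.toEuclideanCLM (𝕜 := ℝ) R).le_opNorm v
  have h2 : -(‖mulVecE R v‖ * ‖v‖) ≤ ⟪mulVecE R v, v⟫ :=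
    (abs_le.mp (abs_real_inner_le_norm _ _)).1
  have h3 : ‖mulVecE R v‖ * ‖v‖ ≤ ‖Matrix.toEuclideanCLM (𝕜 := ℝ) R‖ * ‖v‖ * ‖v‖ := by gcongr
  have h4 := mul_nonneg (mul_nonneg hε (mul_self_nonneg ‖v‖)) (sub_nonneg.mpr hεR)
  have h5 := mul_le_mul_of_nonneg_left (h2.trans' (neg_le_neg h3)) (sq_nonneg ε)
  rw [real_inner_self_eq_norm_mul_norm]
  nlinarith

/-- Pointwise nonnegativity of the quadratic form along the feedback `u = N x + ε (S + R N) x`. -/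
lemma feedback_form_nonneg {ι κ : Type*} [Fintype ι] [Fintype κ] [DecidableEq ι] [DecidableEq κ]
    (Q : Matrix ι ι ℝ) (S N : Matrix κ ι ℝ) (R : Matrix κ κ ℝ) (hR : R.IsSymm)
    {ε : ℝ} (hε : 0 ≤ ε) (hεR : ε * ‖Matrix.toEuclideanCLM (𝕜 := ℝ) R‖ ≤ 2)
    (hP : (Q + Sᵀ * N + Nᵀ * S + Nᵀ * R * N).PosSemidef) (x : EuclideanSpace ℝ ι) :
    0 ≤ ⟪mulVecE Q x, x⟫ + 2 * ⟪mulVecE S x, mulVecE (N + ε • (S + R * N)) x⟫ +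
      ⟪mulVecE R (mulVecE (N + ε • (S + R * N)) x), mulVecE (N + ε • (S + R * N)) x⟫ := by
  have hsymm : ∀ y z, ⟪mulVecE R y, z⟫ = ⟪y, mulVecE R z⟫ := fun y z => by
    conv_lhs => rw [← hR.eq]
    exact inner_mulVecE_transpose R y z
  have h1 := inner_mulVecE_self_nonneg hP x
  have h2 := two_mul_norm_sq_add_nonneg R hε hεR (mulVecE (S + R * N) x)
  set v := mulVecE (S + R * N) x with hv
  have hu : mulVecE (N + ε • (S + R * N)) x = mulVecE N x + ε • v := by
    rw [mulVecE_add_left, mulVecE_smul_left]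
  have hv2 : ⟪v, v⟫ = ⟪mulVecE S x, v⟫ + ⟪mulVecE R (mulVecE N x), v⟫ := by
    conv_lhs => lhs; rw [hv, mulVecE_add_left, mulVecE_mul]
    rw [inner_add_left]
  have hRv : ⟪mulVecE R v, mulVecE N x⟫ = ⟪mulVecE R (mulVecE N x), v⟫ := by
    rw [hsymm, real_inner_comm]
  simp only [mulVecE_add_left, mulVecE_mul, inner_add_left, inner_mulVecE_transpose] at h1
  rw [real_inner_comm (mulVecE S x) (mulVecE N x)] at h1
  rw [hv2] at h2
  rw [hu]
  simp only [mulVecE_add_right, mulVecE_smul_right, inner_add_left, inner_add_right,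
    real_inner_smul_left, real_inner_smul_right, hRv]
  linarith

section Schur

attribute [local instance] Matrix.linftyOpNormedRing Matrix.linftyOpNormedAlgebra

/-- Powers of a complex matrix whose spectrum lies in the open disk of radius `ρ` are `o(ρ ^ k)`,
by Gelfand's formula. -/
lemma tendsto_pow_of_spectrum_lt {ι : Type*} [Fintype ι] [DecidableEq ι] {ρ : ℝ} (hρ : 0 < ρ)
    (F : Matrix ι ι ℂ) (hF : ∀ z ∈ spectrum ℂ F, ‖z‖ < ρ) :
    Tendsto (fun k : ℕ => ((ρ ^ k)⁻¹ : ℝ) * ‖F ^ k‖) atTop (nhds 0) := by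
  -- With an empty index type the spectrum is empty, but all norms vanish.
  cases isEmpty_or_nonempty ι with
  | inl h => simp [Subsingleton.elim _ (0 : Matrix ι ι ℂ)]
  | inr h =>
    have : CompleteSpace (Matrix ι ι ℂ) := FiniteDimensional.complete ℂ _
    lift ρ to NNReal using hρ.le
    have hr : spectralRadius ℂ F < ρ :=
      spectrum.spectralRadius_lt_of_forall_lt F fun z hz => by exact_mod_cast hF z hz
    obtain ⟨s, hs1, hs2⟩ := ENNReal.lt_iff_exists_nnreal_btwn.mp hr
    have hs2 : s < ρ := by exact_mod_cast hs2
    have hg := spectrum.pow_nnnorm_pow_one_div_tendsto_nhds_spectralRadius F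
    have hb : ∀ᶠ k : ℕ in atTop, ‖F ^ k‖ ≤ (s : ℝ) ^ k := by
      filter_upwards [hg.eventually_lt_const hs1, eventually_gt_atTop 0] with k hk hk0
      have hk' : (0 : ℝ) < k := by exact_mod_cast hk0
      have := (ENNReal.rpow_lt_rpow hk hk').le
      rw [← ENNReal.rpow_mul, one_div, inv_mul_cancel₀ hk'.ne', ENNReal.rpow_one,
        ENNReal.rpow_natCast] at this
      exact_mod_cast this
    have hρ' : (0 : ℝ) < ρ := hρ
    refine squeeze_zero' (g := fun k : ℕ => ((s : ℝ) / ρ) ^ k)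
      (Eventually.of_forall fun k => by positivity) ?_ ?_
    · filter_upwards [hb] with k hk
      rw [div_pow, div_eq_inv_mul]
      gcongr
    · exact tendsto_pow_atTop_nhds_zero_of_lt_one (by positivity)
        ((div_lt_one hρ').mpr (by exact_mod_cast hs2))

lemma tendsto_of_isSchur {ι : Type*} [Fintype ι] [DecidableEq ι] {ρ : ℝ} (hρ : 0 < ρ)
    {F : Matrix ι ι ℝ} (hF : IsSchur ρ F) (x : EuclideanSpace ℝ ι) :
    Tendsto (fun k => (ρ ^ k)⁻¹ • mulVecE (F ^ k) x) atTop (nhds 0) := by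
  have h := tendsto_pow_of_spectrum_lt hρ _ hF
  have hnorm : ∀ k, ‖(F.map (Complex.ofReal ·)) ^ k‖ = ‖F ^ k‖ := fun k => by
    have : (F.map (Complex.ofReal ·)) ^ k = (F ^ k).map (Complex.ofReal ·) :=
      (map_pow (Complex.ofRealHom.mapMatrix) F k).symm
    rw [this]
    simp [Matrix.linfty_opNorm_def]
  simp only [hnorm] at h
  have h0 : Tendsto (fun k => (ρ ^ k)⁻¹ • (F ^ k *ᵥ x.ofLp)) atTop (nhds 0) := by
    refine squeeze_zero_norm (fun k => ?_) (by simpa using h.mul_const ‖x.ofLp‖)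
    rw [norm_smul, Real.norm_of_nonneg (by positivity), mul_assoc]
    gcongr
    exact Matrix.linfty_opNorm_mulVec _ _
  exact ((PiLp.continuous_toLp 2 (fun _ : ι => ℝ)).tendsto 0).comp h0

end Schur

/-- **Lemma 2.5 (minimal stability via linear feedback).**
If there are `N` and `ε ∈ [0, 2/‖R‖]` such that `A + B(I + εR)N + εBS` is ρ-Schur and
`Q + SᵀN + NᵀS + NᵀRN ≥ 0`, then `(A,B,M)` with `M = [[Q,Sᵀ],[S,R]]` is ρ-minimally
stable. -/
theorem stmt_4 {d n : ℕ} (A : Matrix (Fin d) (Fin d) ℝ) (B : Matrix (Fin d) (Fin n) ℝ)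
    (Q : Matrix (Fin d) (Fin d) ℝ) (S : Matrix (Fin n) (Fin d) ℝ)
    (R : Matrix (Fin n) (Fin n) ℝ) (hQ : Q.IsSymm) (hR : R.IsSymm) (ρ : ℝ) (hρ : 0 < ρ)
    (h : ∃ (N : Matrix (Fin n) (Fin d) ℝ) (ε : ℝ), 0 ≤ ε ∧
      ε * ‖Matrix.toEuclideanCLM (𝕜 := ℝ) R‖ ≤ 2 ∧
      IsSchur ρ (A + B * (1 + ε • R) * N + ε • (B * S)) ∧
      (Q + Sᵀ * N + Nᵀ * S + Nᵀ * R * N).PosSemidef) :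
    MinStable A B Q S R ρ := by
  obtain ⟨N, ε, hε, hεR, hF, hP⟩ := h
  intro x₀
  set F := A + B * (1 + ε • R) * N + ε • (B * S) with hFdef
  have hFK : F = A + B * (N + ε • (S + R * N)) := by
    rw [hFdef]
    simp only [Matrix.mul_add, Matrix.add_mul, Matrix.mul_one, Matrix.mul_smul, Matrix.smul_mul,
      smul_add, Matrix.mul_assoc]
    abel
  refine ⟨fun k => mulVecE (F ^ k) x₀, fun k => mulVecE (N + ε • (S + R * N)) (mulVecE (F ^ k) x₀),
    fun k => ?_, fun m => ?_, ?_, tendsto_of_isSchur hρ hF x₀⟩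
  · beta_reduce
    rw [pow_succ', mulVecE_mul, ← mulVecE_mul B, ← mulVecE_add_left, ← hFK]
  · exact Finset.sum_nonneg fun k _ => mul_nonneg (by positivity)
      (feedback_form_nonneg Q S N R hR hε hεR hP _)
  · simp only [pow_zero, mulVecE_one]
end

section
/- Let A ∈ ℝ^{d×d}, B ∈ ℝ^{d×n}, let M ∈ ℝ^{(d+n)×(d+n)} be symmetric, and let ρ > 0. Suppose (A,B,M) is ρ-minimally stable and P ∈ ℝ^{d×d} is a symmetric matrix satisfying the dissipation linear matrix inequality [[AᵀPA − ρ²P, AᵀPB],[BᵀPA, BᵀPB]] + M ≤ 0 (negative semidefinite). Then P is positive semidefinite. -/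
/-!
The quadratic form `V x = xᵀ P x` is a storage function. Evaluated at `(x, u)`, the linear matrix
inequality says `V (A x + B u) - ρ² V x + σ(x, u) ≤ 0`, where `σ` is the quadratic form of `M`
(`storage_step`). Along a trajectory, dividing by `ρ^(2(k+1))` and telescoping bounds
`V (ρ⁻ᴺ x(N)) - V (x 0)` above by `-ρ⁻²` times the `N`-term IQC sum (`storage_telescope`), so
`V (ρ⁻ᴺ x(N)) ≤ V (x 0)` whenever the IQC holds. Minimal stability supplies, for every `x 0`, a
trajectory with `ρ⁻ᴺ x(N) → 0`; continuity of `V` then gives `0 ≤ V (x 0)`.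
-/

open Matrix Filter RealInnerProductSpace


/-- The storage function `V x = xᵀ P x`. -/
noncomputable def storage {d : ℕ} (P : Matrix (Fin d) (Fin d) ℝ)
    (x : EuclideanSpace ℝ (Fin d)) : ℝ :=
  x.ofLp ⬝ᵥ P *ᵥ x.ofLp

/-- The supply rate: the quadratic form of `M = [[Q, Sᵀ],[S, R]]` at `(x, u)`. -/
noncomputable def supply {d n : ℕ} (Q : Matrix (Fin d) (Fin d) ℝ) (S : Matrix (Fin n) (Fin d) ℝ)
    (R : Matrix (Fin n) (Fin n) ℝ) (x : EuclideanSpace ℝ (Fin d))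
    (u : EuclideanSpace ℝ (Fin n)) : ℝ :=
  ⟪mulVecE Q x, x⟫ + 2 * ⟪mulVecE S x, u⟫ + ⟪mulVecE R u, u⟫

lemma storage_smul {d : ℕ} (P : Matrix (Fin d) (Fin d) ℝ) (c : ℝ)
    (x : EuclideanSpace ℝ (Fin d)) : storage P (c • x) = c ^ 2 * storage P x := by
  simp only [storage, WithLp.ofLp_smul, mulVec_smul, dotProduct_smul, smul_dotProduct, smul_eq_mul]
  ring

lemma continuous_storage {d : ℕ} (P : Matrix (Fin d) (Fin d) ℝ) : Continuous (storage P) := by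
  unfold storage
  fun_prop

/-- The dissipation inequality in pointwise form: the linear matrix inequality evaluated at the
stacked vector `(x, u)`. -/
lemma storage_step {d n : ℕ} {A : Matrix (Fin d) (Fin d) ℝ} {B : Matrix (Fin d) (Fin n) ℝ}
    {Q : Matrix (Fin d) (Fin d) ℝ} {S : Matrix (Fin n) (Fin d) ℝ} {R : Matrix (Fin n) (Fin n) ℝ}
    {ρ : ℝ} {P : Matrix (Fin d) (Fin d) ℝ}
    (hLMI : (-(Matrix.fromBlocks (Aᵀ * P * A - ρ ^ 2 • P) (Aᵀ * P * B) (Bᵀ * P * A) (Bᵀ * P * B)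
        + Matrix.fromBlocks Q Sᵀ S R)).PosSemidef)
    (x : EuclideanSpace ℝ (Fin d)) (u : EuclideanSpace ℝ (Fin n)) :
    storage P (mulVecE A x + mulVecE B u) - ρ ^ 2 * storage P x + supply Q S R x u ≤ 0 := by
  have h := hLMI.dotProduct_mulVec_nonneg (Sum.elim x.ofLp u.ofLp)
  have hSt : x.ofLp ⬝ᵥ Sᵀ *ᵥ u.ofLp = u.ofLp ⬝ᵥ S *ᵥ x.ofLp := by
    rw [mulVec_transpose, dotProduct_comm, dotProduct_mulVec]
  -- `⟨w, Cᵀ z⟩ = ⟨C w, z⟩`, used to move the outer factors `Aᵀ`, `Bᵀ` of the blocks.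
  have hT {k l : ℕ} (C : Matrix (Fin k) (Fin l) ℝ) (w : Fin l → ℝ) (z : Fin k → ℝ) :
      w ⬝ᵥ Cᵀ *ᵥ z = C *ᵥ w ⬝ᵥ z := by
    rw [mulVec_transpose, dotProduct_comm, ← dotProduct_mulVec, dotProduct_comm]
  simp only [star_trivial, neg_mulVec, add_mulVec, sub_mulVec, fromBlocks_mulVec, dotProduct_neg,
    dotProduct_add, dotProduct_sub, sumElim_dotProduct_sumElim, Sum.elim_comp_inl,
    Sum.elim_comp_inr, ← mulVec_mulVec, hT A, hT B, hSt, smul_mulVec, dotProduct_smul,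
    smul_eq_mul] at h
  simp only [storage, supply, mulVecE, EuclideanSpace.inner_eq_star_dotProduct, star_trivial,
    WithLp.ofLp_add, ofLp_toLpLin, toLin'_apply, mulVec_add, dotProduct_add, add_dotProduct]
  linarith

lemma storage_telescope {d n : ℕ} {A : Matrix (Fin d) (Fin d) ℝ} {B : Matrix (Fin d) (Fin n) ℝ}
    {Q : Matrix (Fin d) (Fin d) ℝ} {S : Matrix (Fin n) (Fin d) ℝ} {R : Matrix (Fin n) (Fin n) ℝ}
    {ρ : ℝ} (hρ : 0 < ρ) {P : Matrix (Fin d) (Fin d) ℝ}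
    (hLMI : (-(Matrix.fromBlocks (Aᵀ * P * A - ρ ^ 2 • P) (Aᵀ * P * B) (Bᵀ * P * A) (Bᵀ * P * B)
        + Matrix.fromBlocks Q Sᵀ S R)).PosSemidef)
    {x : ℕ → EuclideanSpace ℝ (Fin d)} {u : ℕ → EuclideanSpace ℝ (Fin n)}
    (hx : IsTraj A B x u) (N : ℕ) :
    storage P ((ρ ^ N)⁻¹ • x N) + (ρ ^ 2)⁻¹ *
      ∑ k ∈ Finset.range N, (ρ ^ (2 * k))⁻¹ * supply Q S R (x k) (u k) ≤ storage P (x 0) := by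
  induction N with
  | zero => simp
  | succ N ih =>
    have h := storage_step hLMI (x N) (u N)
    rw [← hx N] at h
    have h' := mul_nonpos_of_nonneg_of_nonpos (by positivity : 0 ≤ (ρ ^ (2 * (N + 1)))⁻¹) h
    have e : (ρ ^ (2 * (N + 1)))⁻¹ * (storage P (x (N + 1)) - ρ ^ 2 * storage P (x N)
          + supply Q S R (x N) (u N))
        = ((ρ ^ (N + 1))⁻¹) ^ 2 * storage P (x (N + 1)) - ((ρ ^ N)⁻¹) ^ 2 * storage P (x N)
          + (ρ ^ 2)⁻¹ * ((ρ ^ (2 * N))⁻¹ * supply Q S R (x N) (u N)) := by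
      field_simp
      ring
    rw [e] at h'
    rw [storage_smul] at ih ⊢
    rw [Finset.sum_range_succ, mul_add]
    linarith

/-- **Minimal stability forces LMI solutions to be positive semidefinite.**
If `(A,B,M)` with `M = [[Q,Sᵀ],[S,R]]` is ρ-minimally stable and the symmetric matrix `P`
satisfies the dissipation inequality `[[AᵀPA - ρ²P, AᵀPB],[BᵀPA, BᵀPB]] + M ≤ 0`, then
`P ≥ 0`. -/
theorem stmt_5 {d n : ℕ} (A : Matrix (Fin d) (Fin d) ℝ) (B : Matrix (Fin d) (Fin n) ℝ)
    (Q : Matrix (Fin d) (Fin d) ℝ) (S : Matrix (Fin n) (Fin d) ℝ)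
    (R : Matrix (Fin n) (Fin n) ℝ) (hQ : Q.IsSymm) (hR : R.IsSymm) (ρ : ℝ) (hρ : 0 < ρ)
    (hmin : MinStable A B Q S R ρ)
    (P : Matrix (Fin d) (Fin d) ℝ) (hP : P.IsSymm)
    (hLMI : (-(Matrix.fromBlocks (Aᵀ * P * A - ρ ^ 2 • P) (Aᵀ * P * B) (Bᵀ * P * A) (Bᵀ * P * B)
        + Matrix.fromBlocks Q Sᵀ S R)).PosSemidef) :
    P.PosSemidef := by
  refine PosSemidef.of_dotProduct_mulVec_nonneg (by simpa [IsHermitian] using hP.eq) fun x₀ => ?_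
  obtain ⟨x, u, hx, hiqc, h0, hlim⟩ := hmin (WithLp.toLp 2 x₀)
  have hV : Tendsto (fun k => storage P ((ρ ^ k)⁻¹ • x k)) atTop (nhds 0) := by
    have := ((continuous_storage P).tendsto 0).comp hlim
    simpa [storage, Function.comp_def] using this
  have hle : 0 ≤ storage P (x 0) := by
    refine le_of_tendsto hV ?_
    -- The IQC controls only nonempty partial sums, hence `1 ≤ k`.
    filter_upwards [eventually_ge_atTop 1] with k hk
    obtain ⟨m, rfl⟩ := Nat.exists_eq_add_of_le' hk
    have h1 := storage_telescope hρ hLMI hx (m + 1)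
    have h2 : 0 ≤ ∑ k ∈ Finset.range (m + 1), (ρ ^ (2 * k))⁻¹ * supply Q S R (x k) (u k) :=
      hiqc m
    have h3 := mul_nonneg (by positivity : 0 ≤ (ρ ^ 2)⁻¹) h2
    linarith
  simpa [h0, storage] using hle
end

section
/- Let A ∈ ℝ^{d×d}, B ∈ ℝ^{d×n}, let M ∈ ℝ^{(d+n)×(d+n)} be symmetric, and let ρ > 0. If there exists a positive definite matrix P ∈ ℝ^{d×d} satisfying [[AᵀPA − ρ²P, AᵀPB],[BᵀPA, BᵀPB]] + M ≤ 0 (negative semidefinite), then the triple (A,B,M) is ρ-hyperstable. -/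
/-! The quadratic form `V(x) = xᵀPx` is a Lyapunov function. Testing the matrix inequality on
`(x(k), u(k))` gives `V(x(k+1)) - ρ² V(x(k)) + σ(k) ≤ 0`, where `σ(k)` is the supply rate of the
IQC (`dissipation`). Dividing by `ρ^(2(k+1))` and telescoping, the constraint
`∑ ρ^(-2k) σ(k) ≥ 0` yields `V(x(k)) ≤ ρ^(2k) V(x(0))` (`lyapunov_decay`). Factoring `P = CᵀC` with
`C` invertible (`posDef_factor`) turns this into `‖C x(k)‖ ≤ ρ^k ‖C x(0)‖`, so
`c = ‖C⁻¹‖ ‖C‖ + 1` is a hyperstability constant. -/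

open Matrix Filter RealInnerProductSpace


lemma posDef_factor {d : ℕ} {P : Matrix (Fin d) (Fin d) ℝ} (hP : P.PosDef) :
    ∃ C : Matrix (Fin d) (Fin d) ℝ, IsUnit C ∧ P = Cᵀ * C := by
  open scoped MatrixOrder Matrix.Norms.L2Operator in
  obtain ⟨C, hC, h⟩ := CStarAlgebra.isStrictlyPositive_iff_eq_star_mul_self.mp
    hP.isStrictlyPositive
  exact ⟨C, hC, by rw [h, star_eq_conjTranspose, conjTranspose_eq_transpose_of_trivial]⟩

/-- The matrix inequality for `P = CᵀC`, tested on the vector `(x, u)`. -/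
lemma dissipation {d n : ℕ} {A C Q : Matrix (Fin d) (Fin d) ℝ} {B : Matrix (Fin d) (Fin n) ℝ}
    {S : Matrix (Fin n) (Fin d) ℝ} {R : Matrix (Fin n) (Fin n) ℝ} {ρ : ℝ}
    (h : (-(Matrix.fromBlocks (Aᵀ * (Cᵀ * C) * A - ρ ^ 2 • (Cᵀ * C)) (Aᵀ * (Cᵀ * C) * B)
        (Bᵀ * (Cᵀ * C) * A) (Bᵀ * (Cᵀ * C) * B) + Matrix.fromBlocks Q Sᵀ S R)).PosSemidef)
    (x : EuclideanSpace ℝ (Fin d)) (u : EuclideanSpace ℝ (Fin n)) :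
    ‖mulVecE C (mulVecE A x + mulVecE B u)‖ ^ 2 +
      (⟪mulVecE Q x, x⟫ + 2 * ⟪mulVecE S x, u⟫ + ⟪mulVecE R u, u⟫)
      ≤ ρ ^ 2 * ‖mulVecE C x‖ ^ 2 := by
  have key := h.dotProduct_mulVec_nonneg (Sum.elim x.ofLp u.ofLp)
  have hT : ∀ {l m : ℕ} (X : Matrix (Fin l) (Fin m) ℝ) (v : Fin m → ℝ) (w : Fin l → ℝ),
      v ⬝ᵥ (Xᵀ *ᵥ w) = (X *ᵥ v) ⬝ᵥ w := by
    intro l m X v w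
    rw [dotProduct_mulVec, vecMul_transpose]
  simp only [star_trivial, neg_mulVec, fromBlocks_add, fromBlocks_mulVec, dotProduct_neg,
    Sum.elim_comp_inl, Sum.elim_comp_inr, sumElim_dotProduct_sumElim, add_mulVec, sub_mulVec,
    smul_mulVec, dotProduct_add, dotProduct_sub, dotProduct_smul, ← mulVec_mulVec, hT,
    smul_eq_mul] at key
  simp only [← real_inner_self_eq_norm_sq, EuclideanSpace.inner_eq_star_dotProduct, mulVecE,
    ofLp_toLpLin, toLin'_apply, star_trivial, WithLp.ofLp_add, mulVec_add, dotProduct_add,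
    add_dotProduct]
  have e1 := dotProduct_comm (S *ᵥ x.ofLp) u.ofLp
  linarith

/-- Telescoping of a weighted dissipation inequality with storage `V` and supply `s`. -/
lemma lyapunov_decay {ρ : ℝ} (hρ : 0 < ρ) {V s : ℕ → ℝ}
    (hV : ∀ k, V (k + 1) + s k ≤ ρ ^ 2 * V k)
    (hs : ∀ N : ℕ, 0 ≤ ∑ k ∈ Finset.range (N + 1), (ρ ^ (2 * k))⁻¹ * s k) (k : ℕ) :
    V k ≤ ρ ^ (2 * k) * V 0 := by
  have tel : ∀ k, ρ ^ 2 * ((ρ ^ (2 * k))⁻¹ * V k) +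
      ∑ j ∈ Finset.range k, (ρ ^ (2 * j))⁻¹ * s j ≤ ρ ^ 2 * V 0 := by
    intro k
    induction k with
    | zero => simp
    | succ k ih =>
      rw [Finset.sum_range_succ]
      have h1 : ρ ^ 2 * ((ρ ^ (2 * (k + 1)))⁻¹ * V (k + 1)) = (ρ ^ (2 * k))⁻¹ * V (k + 1) := by
        rw [mul_add, pow_add]
        field_simp
      have h2 := mul_le_mul_of_nonneg_left (hV k) (inv_nonneg.mpr (pow_pos hρ (2 * k)).le)
      rw [h1]
      linarith
  cases k with
  | zero => simp
  | succ k =>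
    have h1 : ρ ^ 2 * ((ρ ^ (2 * (k + 1)))⁻¹ * V (k + 1)) ≤ ρ ^ 2 * V 0 := by
      linarith [tel (k + 1), hs k]
    have h2 := le_of_mul_le_mul_left h1 (pow_pos hρ 2)
    rwa [inv_mul_le_iff₀ (pow_pos hρ _)] at h2

/-- **Dissipation inequality implies hyperstability.**
If there is a positive definite `P` satisfying
`[[AᵀPA - ρ²P, AᵀPB],[BᵀPA, BᵀPB]] + M ≤ 0` with `M = [[Q,Sᵀ],[S,R]]`, then `(A,B,M)`
is ρ-hyperstable. -/
theorem stmt_6 {d n : ℕ} (A : Matrix (Fin d) (Fin d) ℝ) (B : Matrix (Fin d) (Fin n) ℝ)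
    (Q : Matrix (Fin d) (Fin d) ℝ) (S : Matrix (Fin n) (Fin d) ℝ)
    (R : Matrix (Fin n) (Fin n) ℝ) (hQ : Q.IsSymm) (hR : R.IsSymm) (ρ : ℝ) (hρ : 0 < ρ)
    (h : ∃ P : Matrix (Fin d) (Fin d) ℝ, P.PosDef ∧
      (-(Matrix.fromBlocks (Aᵀ * P * A - ρ ^ 2 • P) (Aᵀ * P * B) (Bᵀ * P * A) (Bᵀ * P * B)
        + Matrix.fromBlocks Q Sᵀ S R)).PosSemidef) :
    Hyperstable A B Q S R ρ := by
  obtain ⟨P, hP, h⟩ := h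
  obtain ⟨C, hC, rfl⟩ := posDef_factor hP
  set T := (Matrix.toEuclideanLin C).toContinuousLinearMap with hT
  set T' := (Matrix.toEuclideanLin C⁻¹).toContinuousLinearMap with hT'
  have hinv : ∀ v, T' (T v) = v := by
    intro v
    ext i
    simp [hT, hT', Matrix.nonsing_inv_mul C ((Matrix.isUnit_iff_isUnit_det C).mp hC)]
  refine ⟨‖T'‖ * ‖T‖ + 1, by positivity, fun x u hx hI k => ?_⟩
  have hdec := lyapunov_decay hρ (V := fun k => ‖T (x k)‖ ^ 2)
    (fun k => by
      have := dissipation h (x k) (u k)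
      rw [← hx k] at this
      exact this) hI k
  have hk : ‖T (x k)‖ ≤ ρ ^ k * ‖T (x 0)‖ := by
    refine (pow_le_pow_iff_left₀ (norm_nonneg _) (by positivity) two_ne_zero).mp ?_
    calc ‖T (x k)‖ ^ 2 ≤ ρ ^ (2 * k) * ‖T (x 0)‖ ^ 2 := hdec
      _ = (ρ ^ k * ‖T (x 0)‖) ^ 2 := by ring
  calc ‖x k‖ = ‖T' (T (x k))‖ := by rw [hinv]
    _ ≤ ‖T'‖ * ‖T (x k)‖ := T'.le_opNorm _
    _ ≤ ‖T'‖ * (ρ ^ k * (‖T‖ * ‖x 0‖)) := by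
      gcongr
      exact hk.trans (by gcongr; exact T.le_opNorm _)
    _ ≤ (‖T'‖ * ‖T‖ + 1) * ρ ^ k * ‖x 0‖ := by
      have : 0 ≤ ρ ^ k * ‖x 0‖ := by positivity
      linarith
end

section
/- Let A ∈ ℝ^{d×d}, B ∈ ℝ^{d×n}, C ∈ ℝ^{n×d}, let m̄ < L̄ be real numbers, and let M be the sector IQC matrix M = [[−2L̄m̄ CᵀC, (L̄+m̄)Cᵀ],[(L̄+m̄)C, −2I]]. Let ρ > 0, suppose B ≠ 0, and suppose there exists k ∈ [m̄, L̄] such that A + kBC is ρ-Schur. Then (A,B,M) is ρ-hyperstable if and only if the Hermitian part of (I − m̄H(z))*(I − L̄H(z)) is positive semidefinite for every complex number z with |z| = ρ that is not an eigenvalue of A, where H(z) = C(zI − A)^{−1}B. -/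
/-!
The sector constraint has supply rate `2 ⟪u - m y, L y - u⟫` with `y = C x`, and the condition on `H(z)`
says that the Hermitian version of this form is nonpositive on phasors `z X = A X + B U`, `|z| = ρ`
(`CircleIneq`, `circleIneq_iff`).

Sufficiency. The feedback `u = v + κ C x` and the weights `ρ⁻ᵏ` reduce the claim to radius one, a
Schur matrix and a sector with `m ≤ 0 ≤ L`; by continuity of the resolvent the inequality then holds on
the whole unit circle (`CircleIneq.closedLoop`). Parseval for the discrete Fourier transform turns
it into `∑ F ≤ 0` over a period of any periodic trajectory (`periodic_sum_nonpos`). A trajectory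
started at zero is extended by zero input, where `F ≥ 0`, and closed up to a long period; in the limit
`∑_{k<N} F ≤ 0`, and with a well-chosen last input
`∑_{k<N} F + ((L - m) / 2)² |C ξ(N)|² ≤ 0` (`sum_sectorForm_add_le`). For an arbitrary trajectory
satisfying the constraint, the free response is summable and the resulting quadratic-versus-linear
estimate bounds `C ξ` and `v`, hence `x`, by a multiple of `|x(0)|`
(`bounded_of_periodicDissipative`).

Necessity. If the inequality fails at `z`, it fails at a nearby non-real point of the circle, and
persists in a quantitative form at some `w` with `|w| > ρ` (`exists_outer_point`). The trajectory
`Re (wᵏ X)` has weighted partial sums of the supply tending to `+∞`; restarted where the partial sum is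
minimal it satisfies the constraint, yet it outgrows `ρᵏ` (`growth_contradiction`).
-/
open Matrix Filter RealInnerProductSpace
open scoped ComplexOrder

/-! ### From dissipation over periods to bounded trajectories -/

/-- The sector form `⟪v - m y, L y - v⟫`, nonnegative exactly when, in one dimension, `v` lies between
`m y` and `L y`. -/
noncomputable def sectorForm {G : Type*} [NormedAddCommGroup G] [InnerProductSpace ℝ G]
    (m L : ℝ) (y v : G) : ℝ := ⟪v - m • y, L • y - v⟫

section bounded
variable {E G : Type*} [NormedAddCommGroup E] [NormedSpace ℝ E]
  [NormedAddCommGroup G] [InnerProductSpace ℝ G]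

theorem sectorForm_zero_nonneg {m L : ℝ} (hm : m ≤ 0) (hL : 0 ≤ L) (y : G) :
    0 ≤ sectorForm m L y 0 := by
  have : sectorForm m L y 0 = (-m * L) * ‖y‖ ^ 2 := by
    simp [sectorForm, inner_neg_left, inner_smul_left, inner_smul_right]; ring
  rw [this]
  have : 0 ≤ -m * L := mul_nonneg (by linarith) hL
  positivity

theorem sectorForm_expand (m L : ℝ) (y v : G) :
    sectorForm m L y v = -‖v‖ ^ 2 + (L + m) * ⟪v, y⟫ - m * L * ‖y‖ ^ 2 := by
  simp only [sectorForm, inner_sub_left, inner_sub_right, inner_smul_left, inner_smul_right,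
    real_inner_self_eq_norm_sq, real_inner_comm y v]
  simp; ring

theorem sectorForm_le (m L : ℝ) (y v : G) :
    sectorForm m L y v ≤ -‖v‖ ^ 2 / 2 + (L ^ 2 + m ^ 2) / 2 * ‖y‖ ^ 2 := by
  rw [sectorForm_expand]
  have h := sq_nonneg ‖v - (L + m) • y‖
  rw [norm_sub_sq_real, inner_smul_right, norm_smul, mul_pow, Real.norm_eq_abs, sq_abs] at h
  nlinarith

theorem sectorForm_add_sub_le (m L : ℝ) (y w v : G) :
    |sectorForm m L (y + w) v - sectorForm m L y v| ≤
      (|L| + |m| + 2 * |m * L|) * ‖w‖ * (‖v‖ + ‖y‖ + ‖w‖) := by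
  have h : sectorForm m L (y + w) v - sectorForm m L y v =
      (L + m) * ⟪v, w⟫ - 2 * (m * L) * ⟪y, w⟫ - m * L * ‖w‖ ^ 2 := by
    rw [sectorForm_expand, sectorForm_expand, norm_add_sq_real, inner_add_right]; ring
  rw [h]
  have h1 := abs_real_inner_le_norm v w
  have h2 := abs_real_inner_le_norm y w
  have h3 : |(L + m) * ⟪v, w⟫| ≤ (|L| + |m|) * (‖v‖ * ‖w‖) := by
    rw [abs_mul]; gcongr; exact abs_add_le _ _
  have h4 : |2 * (m * L) * ⟪y, w⟫| ≤ 2 * |m * L| * (‖y‖ * ‖w‖) := by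
    rw [abs_mul, abs_mul 2, abs_two]; gcongr
  have h5 : |m * L * ‖w‖ ^ 2| = |m * L| * ‖w‖ ^ 2 := by
    rw [abs_mul, abs_of_nonneg (sq_nonneg ‖w‖)]
  calc _ ≤ |(L + m) * ⟪v, w⟫| + |2 * (m * L) * ⟪y, w⟫| + |m * L * ‖w‖ ^ 2| :=
        (abs_sub _ _).trans (by gcongr; exact abs_sub _ _)
    _ ≤ (|L| + |m|) * (‖v‖ * ‖w‖) + 2 * |m * L| * (‖y‖ * ‖w‖) + |m * L| * ‖w‖ ^ 2 := by
        rw [h5]; gcongr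
    _ ≤ _ := by
        have a1 : 0 ≤ |m * L| * (‖v‖ * ‖w‖) := by positivity
        have a2 : 0 ≤ (|L| + |m|) * (‖y‖ * ‖w‖) := by positivity
        have a3 : 0 ≤ (|L| + |m|) * (‖w‖ * ‖w‖) := by positivity
        have a4 : 0 ≤ |m * L| * (‖w‖ * ‖w‖) := by positivity
        nlinarith

/-- Along every trajectory of `x⁺ = A x + B v` that returns to its initial state after `T` steps, the
sector form of `(C x, v)` sums to at most zero over those `T` steps. -/
def PeriodicDissipative (A : E →L[ℝ] E) (B : G →L[ℝ] E) (C : E →L[ℝ] G) (m L : ℝ) : Prop :=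
  ∀ T : ℕ, 0 < T → ∀ (x : ℕ → E) (v : ℕ → G), (∀ k, x (k + 1) = A (x k) + B (v k)) →
    x T = x 0 → ∑ k ∈ Finset.range T, sectorForm m L (C (x k)) (v k) ≤ 0

/-- When `‖A ^ T‖ ≤ 1/2`, the initial state of a periodic trajectory can be solved for, with a bound. -/
theorem exists_fixed [FiniteDimensional ℝ E] (A : E →L[ℝ] E) (T : ℕ) (hA : ‖A ^ T‖ ≤ 1 / 2) (b : E) :
    ∃ p, p = (A ^ T) p + b ∧ ‖p‖ ≤ 2 * ‖b‖ := by
  have key : ∀ p, ‖p‖ ≤ 2 * ‖p - (A ^ T) p‖ := by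
    intro p
    have h1 := (A ^ T).le_opNorm p
    have h2 := norm_sub_norm_le p ((A ^ T) p)
    nlinarith [norm_nonneg p]
  have inj : Function.Injective (LinearMap.id - ((A ^ T : E →L[ℝ] E) : E →ₗ[ℝ] E) : E →ₗ[ℝ] E) := by
    rw [injective_iff_map_eq_zero]
    intro p hp
    have := key p
    have h0 : p - (A ^ T) p = 0 := hp
    rw [h0] at this
    simpa using this
  obtain ⟨p, hp⟩ := (LinearMap.injective_iff_surjective.mp inj) b
  have hp' : p - (A ^ T) p = b := hp
  refine ⟨p, ?_, ?_⟩
  · rw [← hp']; abel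
  · rw [← hp']; exact key p

/-- Dissipation passes from periodic trajectories to trajectories started at `0`: the trajectory is
followed by `j` steps with zero input, on which the form is nonnegative because `m ≤ 0 ≤ L`, then
closed up to period `N + j` by a correction of the initial state that vanishes as `j → ∞`. -/
theorem sum_sectorForm_nonpos [FiniteDimensional ℝ E] {A : E →L[ℝ] E} {B : G →L[ℝ] E}
    {C : E →L[ℝ] G} {m L : ℝ}
    (hm : m ≤ 0) (hL : 0 ≤ L) (hA : Tendsto (fun k => ‖A ^ k‖) atTop (nhds 0))
    (hP : PeriodicDissipative A B C m L) (N : ℕ) (ξ : ℕ → E) (v : ℕ → G) (h0 : ξ 0 = 0)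
    (hξ : ∀ k < N, ξ (k + 1) = A (ξ k) + B (v k)) :
    ∑ k ∈ Finset.range N, sectorForm m L (C (ξ k)) (v k) ≤ 0 := by
  have hlim0 : Tendsto (fun j => (A ^ j) (ξ N)) atTop (nhds 0) := by
    rw [tendsto_zero_iff_norm_tendsto_zero]
    refine squeeze_zero (fun _ => norm_nonneg _) (fun j => (A ^ j).le_opNorm (ξ N)) ?_
    simpa using hA.mul_const ‖ξ N‖
  have hev : ∀ᶠ j in atTop, ‖A ^ (N + j)‖ ≤ 1 / 2 := by
    have := (hA.comp (tendsto_add_atTop_nat N)).eventually (ge_mem_nhds (show (0:ℝ) < 1/2 by norm_num))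
    filter_upwards [this] with j hj
    rw [add_comm]; exact hj
  have hex : ∀ j, ∃ p : E, ‖A ^ (N + j)‖ ≤ 1 / 2 →
      p = (A ^ (N + j)) p + (A ^ j) (ξ N) ∧ ‖p‖ ≤ 2 * ‖(A ^ j) (ξ N)‖ := by
    intro j
    by_cases h : ‖A ^ (N + j)‖ ≤ 1 / 2
    · obtain ⟨p, hp⟩ := exists_fixed A (N + j) h ((A ^ j) (ξ N))
      exact ⟨p, fun _ => hp⟩
    · exact ⟨0, fun h' => absurd h' h⟩
  choose p hp using hex
  have hp0 : Tendsto p atTop (nhds 0) := by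
    rw [tendsto_zero_iff_norm_tendsto_zero]
    refine squeeze_zero' (.of_forall fun _ => norm_nonneg _)
      (hev.mono fun j hj => (hp j hj).2) ?_
    simpa using (hlim0.norm).const_mul 2
  let g : E → ℝ := fun p => ∑ k ∈ Finset.range N, sectorForm m L (C ((A ^ k) p + ξ k)) (v k)
  have hg : Continuous g := by unfold g sectorForm; fun_prop
  have hle : ∀ᶠ j in atTop, g (p j) ≤ 0 := by
    filter_upwards [hev, eventually_gt_atTop 0] with j hj hj0
    obtain ⟨hpj, -⟩ := hp j hj
    have := hP (N + j) (by omega)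
      (fun k => (A ^ k) (p j) + if k ≤ N then ξ k else (A ^ (k - N)) (ξ N))
      (fun k => if k < N then v k else 0) ?_ ?_
    · rw [Finset.sum_range_add] at this
      have h1 : ∑ k ∈ Finset.range N, sectorForm m L
          (C ((A ^ k) (p j) + if k ≤ N then ξ k else (A ^ (k - N)) (ξ N)))
          (if k < N then v k else 0) = g (p j) := by
        refine Finset.sum_congr rfl fun k hk => ?_
        have hk := Finset.mem_range.mp hk
        rw [if_pos hk.le, if_pos hk]
      rw [h1] at this
      refine le_trans (le_add_of_nonneg_right ?_) this
      refine Finset.sum_nonneg fun k _ => ?_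
      rw [if_neg (show ¬ (N + k < N) by omega)]
      exact sectorForm_zero_nonneg hm hL _
    · intro k
      rcases lt_trichotomy k N with hk | hk | hk
      · simp only [show k + 1 ≤ N by omega, hk.le, hk, if_true, hξ k hk, pow_succ', map_add,
          mul_apply_eq_comp]
        abel
      · subst hk
        simp [pow_succ']
      · simp only [show ¬ k + 1 ≤ N by omega, show ¬ k ≤ N by omega, show ¬ k < N by omega,
          if_false, show k + 1 - N = (k - N) + 1 by omega, pow_succ', map_add,
          mul_apply_eq_comp, map_zero]
        abel
    · simp only [show ¬ N + j ≤ N by omega, if_false, Nat.add_sub_cancel_left]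
      rw [← hpj]; simp [h0]
  have := le_of_tendsto (hg.continuousAt.tendsto.comp hp0) hle
  simpa [g] using this

/-- Storage bound: appending the input `(L + m) / 2 • C (ξ N)`, which maximizes the form at the last
step, leaves a positive multiple of `‖C (ξ N)‖ ^ 2`. -/
theorem sum_sectorForm_add_le [FiniteDimensional ℝ E] {A : E →L[ℝ] E} {B : G →L[ℝ] E}
    {C : E →L[ℝ] G} {m L : ℝ}
    (hm : m ≤ 0) (hL : 0 ≤ L) (hA : Tendsto (fun k => ‖A ^ k‖) atTop (nhds 0))
    (hP : PeriodicDissipative A B C m L) (N : ℕ) (ξ : ℕ → E) (v : ℕ → G) (h0 : ξ 0 = 0)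
    (hξ : ∀ k, ξ (k + 1) = A (ξ k) + B (v k)) :
    ∑ k ∈ Finset.range N, sectorForm m L (C (ξ k)) (v k) + ((L - m) / 2) ^ 2 * ‖C (ξ N)‖ ^ 2
      ≤ 0 := by
  have := sum_sectorForm_nonpos (C := C) hm hL hA hP (N + 1)
    (fun k => if k ≤ N then ξ k else A (ξ N) + B (((L + m) / 2) • C (ξ N)))
    (fun k => if k < N then v k else ((L + m) / 2) • C (ξ N)) (by simp [h0]) ?_
  · rw [Finset.sum_range_succ] at this
    refine le_trans (le_of_eq ?_) this
    congr 1
    · refine Finset.sum_congr rfl fun k hk => ?_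
      have hk := Finset.mem_range.mp hk
      rw [if_pos hk.le, if_pos hk]
    · simp only [le_refl, if_true, lt_irrefl, if_false, sectorForm, ← sub_smul, inner_smul_left,
        inner_smul_right, real_inner_self_eq_norm_sq]
      simp; ring
  · intro k hk
    rcases Nat.lt_succ_iff_lt_or_eq.mp hk with h | h
    · simp [show k + 1 ≤ N by omega, h, h.le, hξ k]
    · subst h; simp

theorem norm_forced_le {A : E →L[ℝ] E} {B : G →L[ℝ] E} (hA : Summable fun k => ‖A ^ k‖)
    (ξ : ℕ → E) (v : ℕ → G) (h0 : ξ 0 = 0) (hξ : ∀ k, ξ (k + 1) = A (ξ k) + B (v k))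
    {b : ℝ} (hb : ∀ k, ‖v k‖ ≤ b) (N : ℕ) : ‖ξ N‖ ≤ (∑' k, ‖A ^ k‖) * (‖B‖ * b) := by
  have hb0 : 0 ≤ b := (norm_nonneg _).trans (hb 0)
  have key : ∀ N i, ‖(A ^ i) (ξ N)‖ ≤ (∑ j ∈ Finset.range N, ‖A ^ (i + j)‖) * (‖B‖ * b) := by
    intro N
    induction N with
    | zero => intro i; simp [h0]
    | succ N ih =>
      intro i
      have h1 : (A ^ i) (ξ (N + 1)) = (A ^ (i + 1)) (ξ N) + (A ^ i) (B (v N)) := by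
        rw [hξ, map_add, pow_succ]; rfl
      rw [h1, Finset.sum_range_succ', add_mul]
      refine (norm_add_le _ _).trans (add_le_add ((ih (i + 1)).trans_eq ?_) ?_)
      · simp only [add_right_comm, add_assoc]
      · refine ((A ^ i).le_opNorm _).trans ?_
        rw [add_zero]
        gcongr
        refine (B.le_opNorm _).trans ?_
        gcongr
        exact hb N
  have := key N 0
  simp only [pow_zero, zero_add, one_apply_eq_self] at this
  refine this.trans ?_
  gcongr
  exact hA.sum_le_tsum _ fun _ _ => norm_nonneg _

/-- A gain `K` whose square dominates two expressions that are affine in `K`; it closes the induction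
in `bounded_of_periodicDissipative`. -/
theorem exists_gain {ε D σ q : ℝ} (hε : 0 < ε) (hD : 0 ≤ D) (hσ : 0 ≤ σ) (hq : 0 ≤ q) :
    ∃ K > 0, D * σ * (2 * K + σ) / ε ≤ K ^ 2 ∧
      2 * (D * σ * (2 * K + σ)) + q * (2 * (D * σ * (2 * K + σ) / ε) + 2 * σ ^ 2) ≤ K ^ 2 := by
  obtain ⟨r, hr⟩ : ∃ r, r = 2 + 2 * q / ε + 1 / ε := ⟨_, rfl⟩
  have hr0 : 0 ≤ r := by rw [hr]; positivity
  obtain ⟨a, ha⟩ : ∃ a, a = r * (D * σ * 2) := ⟨_, rfl⟩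
  obtain ⟨b, hb⟩ : ∃ b, b = r * (D * σ * σ) + 2 * q * σ ^ 2 := ⟨_, rfl⟩
  have ha0 : 0 ≤ a := by rw [ha]; positivity
  have hb0 : 0 ≤ b := by rw [hb]; positivity
  obtain ⟨K, hK⟩ : ∃ K, K = a + b + 1 := ⟨_, rfl⟩
  have hK0 : 0 < K := by rw [hK]; positivity
  have hK2 : a * K + b ≤ K ^ 2 := by
    have h1 : b ≤ b * K := le_mul_of_one_le_right hb0 (by linarith)
    have : K ^ 2 = a * K + b * K + K := by rw [sq]; nth_rewrite 1 [hK]; ring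
    linarith
  have hexp : a * K + b = (2 * (D * σ * (2 * K + σ)) +
      q * (2 * (D * σ * (2 * K + σ) / ε) + 2 * σ ^ 2)) + D * σ * (2 * K + σ) / ε := by
    rw [ha, hb, hr]; ring
  have h1 : 0 ≤ D * σ * (2 * K + σ) / ε := by positivity
  have h2 : 0 ≤ 2 * (D * σ * (2 * K + σ)) +
      q * (2 * (D * σ * (2 * K + σ) / ε) + 2 * σ ^ 2) := by positivity
  exact ⟨K, hK0, by linarith, by linarith⟩

/-- Split `x k = A ^ k x₀ + ξ k`. The free response has summable norm, so replacing `x` by `ξ` changes the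
sum of the form over `[0, N)` by at most `‖x₀‖ ^ 2` times an affine function of `K` when `C ξ` and `v` are bounded
by `K ‖x₀‖` before time `N`; the storage bound and the constraint up to times `N - 1` and `N` then
return the same bound at time `N`, for `K` as in `exists_gain`. -/
theorem bounded_of_periodicDissipative [FiniteDimensional ℝ E] {A : E →L[ℝ] E} {B : G →L[ℝ] E}
    {C : E →L[ℝ] G} {m L : ℝ} (hmL : m < L) (hm : m ≤ 0) (hL : 0 ≤ L) (hA : Summable fun k => ‖A ^ k‖)
    (hP : PeriodicDissipative A B C m L) :
    ∃ c > 0, ∀ (x : ℕ → E) (v : ℕ → G), (∀ k, x (k + 1) = A (x k) + B (v k)) →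
      (∀ N, 0 ≤ ∑ k ∈ Finset.range (N + 1), sectorForm m L (C (x k)) (v k)) →
      ∀ k, ‖x k‖ ≤ c * ‖x 0‖ := by
  set s := ∑' k, ‖A ^ k‖ with hs
  have hs0 : 0 ≤ s := tsum_nonneg fun _ => norm_nonneg _
  have hAs : ∀ k, ‖A ^ k‖ ≤ s := fun k => hA.le_tsum k fun _ _ => norm_nonneg _
  set σ := ‖C‖ * s with hσ
  have hσ0 : 0 ≤ σ := by positivity
  set D := |L| + |m| + 2 * |m * L| with hD
  have hD0 : 0 ≤ D := by positivity
  set ε := ((L - m) / 2) ^ 2 with hε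
  have hε0 : 0 < ε := by have : 0 < L - m := by linarith
                         positivity
  set q := L ^ 2 + m ^ 2 with hq
  have hq0 : 0 ≤ q := by positivity
  obtain ⟨K, hK0, hK1, hK2⟩ := exists_gain hε0 hD0 hσ0 hq0
  clear_value q ε
  refine ⟨s + s * (‖B‖ * K) + 1, by positivity, fun x v hx hI => ?_⟩
  set t := ‖x 0‖ with ht
  have ht0 : 0 ≤ t := norm_nonneg _
  let ξ : ℕ → E := fun k => x k - (A ^ k) (x 0)
  have hξ0 : ξ 0 = 0 := by simp [ξ]
  have hξ : ∀ k, ξ (k + 1) = A (ξ k) + B (v k) := by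
    intro k
    simp only [ξ, hx k, pow_succ', map_sub, mul_apply_eq_comp]; abel
  have hAt : Tendsto (fun k => ‖A ^ k‖) atTop (nhds 0) := hA.tendsto_atTop_zero
  have hw : ∀ k, ‖C ((A ^ k) (x 0))‖ ≤ ‖C‖ * ‖A ^ k‖ * t := fun k => by
    refine (C.le_opNorm _).trans ?_
    rw [mul_assoc]
    gcongr
    exact (A ^ k).le_opNorm _
  have hwσ : ∀ k, ‖C ((A ^ k) (x 0))‖ ≤ σ * t := fun k => by
    refine (hw k).trans ?_
    have := hAs k
    rw [hσ]; gcongr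
  have hy : ∀ k, C (x k) = C (ξ k) + C ((A ^ k) (x 0)) := fun k => by simp [ξ]
  have hbd : ∀ N, ‖C (ξ N)‖ ≤ K * t ∧ ‖v N‖ ≤ K * t := by
    intro N
    induction N using Nat.strong_induction_on with
    | _ N ih =>
    set Γ := D * σ * (2 * K + σ) with hΓ
    have hΓ0 : 0 ≤ Γ := by positivity
    have hcross : |∑ k ∈ Finset.range N, sectorForm m L (C (x k)) (v k) -
        ∑ k ∈ Finset.range N, sectorForm m L (C (ξ k)) (v k)| ≤ Γ * t ^ 2 := by
      rw [← Finset.sum_sub_distrib]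
      refine (Finset.abs_sum_le_sum_abs _ _).trans ?_
      calc _ ≤ ∑ k ∈ Finset.range N, ‖A ^ k‖ * (D * ‖C‖ * t * (2 * K * t + σ * t)) := by
            refine Finset.sum_le_sum fun k hk => ?_
            obtain ⟨h1, h2⟩ := ih k (Finset.mem_range.mp hk)
            rw [hy]
            refine (sectorForm_add_sub_le _ _ _ _ _).trans ?_
            calc _ ≤ D * (‖C‖ * ‖A ^ k‖ * t) * (K * t + K * t + σ * t) := by
                  gcongr
                  · exact hw k
                  · exact hwσ k
              _ = _ := by ring
        _ ≤ s * (D * ‖C‖ * t * (2 * K * t + σ * t)) := by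
            rw [← Finset.sum_mul]
            gcongr
            exact hA.sum_le_tsum _ fun _ _ => norm_nonneg _
        _ = Γ * t ^ 2 := by rw [hΓ, hσ]; ring
    have hcr := abs_le.mp hcross
    have h1 := sum_sectorForm_add_le hm hL hAt hP N ξ v hξ0 hξ
    rw [← hε] at h1
    have hpos : 0 ≤ ∑ k ∈ Finset.range N, sectorForm m L (C (x k)) (v k) := by
      rcases N with _ | N
      · simp
      · exact hI N
    have hη : ε * ‖C (ξ N)‖ ^ 2 ≤ Γ * t ^ 2 := by
      linarith [hcr.2]
    have hη' : ‖C (ξ N)‖ ^ 2 ≤ Γ / ε * t ^ 2 := by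
      rw [div_mul_eq_mul_div, le_div_iff₀ hε0]; linarith
    have hεη : 0 ≤ ε * ‖C (ξ N)‖ ^ 2 := by positivity
    have hlast := hI N
    rw [Finset.sum_range_succ] at hlast
    have hF := sectorForm_le m L (C (x N)) (v N)
    rw [← hq] at hF
    have hyN : ‖C (x N)‖ ^ 2 ≤ 2 * (Γ / ε * t ^ 2) + 2 * (σ * t) ^ 2 := by
      have h2 : ‖C (x N)‖ ≤ ‖C (ξ N)‖ + σ * t := by
        rw [hy]; exact (norm_add_le _ _).trans (by gcongr; exact hwσ N)
      calc _ ≤ (‖C (ξ N)‖ + σ * t) ^ 2 := by gcongr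
        _ ≤ 2 * ‖C (ξ N)‖ ^ 2 + 2 * (σ * t) ^ 2 := by nlinarith [sq_nonneg (‖C (ξ N)‖ - σ * t)]
        _ ≤ _ := by gcongr
    have hv : ‖v N‖ ^ 2 ≤ 2 * (Γ * t ^ 2) + q * (2 * (Γ / ε * t ^ 2) + 2 * (σ * t) ^ 2) := by
      have : q * ‖C (x N)‖ ^ 2 ≤ q * (2 * (Γ / ε * t ^ 2) + 2 * (σ * t) ^ 2) := by gcongr
      linarith [hcr.2]
    have hKt1 := mul_le_mul_of_nonneg_right hK1 (sq_nonneg t)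
    have hKt2 := mul_le_mul_of_nonneg_right hK2 (sq_nonneg t)
    constructor
    · refine abs_le_of_sq_le_sq' ?_ (by positivity) |>.2
      rw [mul_pow]; exact hη'.trans hKt1
    · refine abs_le_of_sq_le_sq' ?_ (by positivity) |>.2
      rw [mul_pow]; refine (hv.trans_eq ?_).trans hKt2
      rw [hΓ]; ring
  intro k
  have h1 := norm_forced_le hA ξ v hξ0 hξ (fun k => (hbd k).2) k
  have h2 : x k = (A ^ k) (x 0) + ξ k := by simp [ξ]
  have h3 : ‖(A ^ k) (x 0)‖ ≤ s * t := ((A ^ k).le_opNorm _).trans (by gcongr; exact hAs k)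
  calc ‖x k‖ ≤ ‖(A ^ k) (x 0)‖ + ‖ξ k‖ := by rw [h2]; exact norm_add_le _ _
    _ ≤ s * t + s * (‖B‖ * (K * t)) := add_le_add h3 h1
    _ ≤ _ := by nlinarith
end bounded

/-! ### Finite Fourier analysis of periodic trajectories -/

theorem sum_rootsOfUnity {T : ℕ} {ω : ℂ} (hω : IsPrimitiveRoot ω T) (hn : ‖ω‖ = 1) {k l : ℕ}
    (hk : k < T) (hl : l < T) :
    ∑ j ∈ Finset.range T, star ((ω ^ j) ^ k) * (ω ^ j) ^ l = if k = l then (T : ℂ) else 0 := by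
  have hω0 : ω ≠ 0 := by intro h; simp [h] at hn
  have hst : star ω = ω⁻¹ := (Complex.inv_eq_conj hn).symm
  have h1 : ∀ j, star ((ω ^ j) ^ k) * (ω ^ j) ^ l = (ω ^ l * (ω ^ k)⁻¹) ^ j := by
    intro j
    rw [star_pow, star_pow, hst, mul_pow, inv_pow, inv_pow, inv_pow, ← pow_mul, ← pow_mul,
      ← pow_mul, ← pow_mul, mul_comm j k, mul_comm j l, mul_comm]
  simp only [h1]
  split_ifs with h
  · subst h
    simp [hω0]
  · have hne : ω ^ l * (ω ^ k)⁻¹ ≠ 1 := by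
      intro he
      rw [mul_inv_eq_one₀ (pow_ne_zero _ hω0)] at he
      exact h (hω.pow_inj hl hk he).symm
    rw [geom_sum_eq hne, mul_pow, inv_pow, ← pow_mul, ← pow_mul, mul_comm l, mul_comm k, pow_mul,
      pow_mul, hω.pow_eq_one]
    simp

/-- Parseval identity for the discrete Fourier transform of two real sequences of length `T`. -/
theorem parseval_roots {T : ℕ} {ω : ℂ} (hω : IsPrimitiveRoot ω T) (hn : ‖ω‖ = 1) (a b : ℕ → ℝ) :
    ∑ j ∈ Finset.range T, star (∑ k ∈ Finset.range T, (ω ^ j) ^ k * (a k : ℂ)) *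
      (∑ k ∈ Finset.range T, (ω ^ j) ^ k * (b k : ℂ)) =
    T * ∑ k ∈ Finset.range T, ((a k * b k : ℝ) : ℂ) := by
  simp only [star_sum, Finset.sum_mul_sum]
  rw [Finset.sum_comm, Finset.mul_sum]
  refine Finset.sum_congr rfl fun k hk => ?_
  rw [Finset.sum_comm]
  have : ∀ l ∈ Finset.range T, ∑ j ∈ Finset.range T,
      star ((ω ^ j) ^ k * (a k : ℂ)) * ((ω ^ j) ^ l * (b l : ℂ)) =
      if k = l then (T : ℂ) * ((a k * b l : ℝ) : ℂ) else 0 := by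
    intro l hl
    have h := sum_rootsOfUnity hω hn (Finset.mem_range.mp hk) (Finset.mem_range.mp hl)
    calc _ = (∑ j ∈ Finset.range T, star ((ω ^ j) ^ k) * (ω ^ j) ^ l) * ((a k * b l : ℝ) : ℂ) := by
          rw [Finset.sum_mul]
          refine Finset.sum_congr rfl fun j _ => ?_
          have : star ((a k : ℂ)) = a k := Complex.conj_ofReal _
          rw [star_mul', this]; push_cast; ring
      _ = _ := by rw [h]; split_ifs <;> simp
  rw [Finset.sum_congr rfl this, Finset.sum_ite_eq, if_pos hk]

/-- A real vector viewed as a complex one. -/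
def cvec {ι : Type*} (x : ι → ℝ) : ι → ℂ := fun i => (x i : ℂ)

theorem map_mulVec_cvec {ι κ : Type*} [Fintype κ] (A : Matrix ι κ ℝ) (x : κ → ℝ) :
    (A.map (Complex.ofReal ·)) *ᵥ cvec x = cvec (A *ᵥ x) := by
  ext i; simp [mulVec, dotProduct, cvec]

/-- The discrete Fourier sum `∑ k < T, ζ ^ k x(k)`, with `ζ` a `T`-th root of unity in applications. -/
noncomputable def fsum {ι : Type*} (T : ℕ) (ζ : ℂ) (x : ℕ → ι → ℝ) : ι → ℂ :=
  ∑ k ∈ Finset.range T, ζ ^ k • cvec (x k)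

theorem map_mulVec_fsum {ι κ : Type*} [Fintype κ] (A : Matrix ι κ ℝ) (T : ℕ) (ζ : ℂ)
    (x : ℕ → κ → ℝ) :
    (A.map (Complex.ofReal ·)) *ᵥ fsum T ζ x = fsum T ζ fun k => A *ᵥ x k := by
  simp only [fsum, mulVec_sum, mulVec_smul, map_mulVec_cvec]

theorem fsum_shift {ι : Type*} {T : ℕ} {ζ : ℂ} (hζ : ζ ^ T = 1) (x : ℕ → ι → ℝ)
    (hx : x T = x 0) : ζ • fsum T ζ (fun k => x (k + 1)) = fsum T ζ x := by
  simp only [fsum, Finset.smul_sum, smul_smul, ← pow_succ']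
  have h1 := Finset.sum_range_succ (fun k => ζ ^ k • cvec (x k)) T
  have h2 := Finset.sum_range_succ' (fun k => ζ ^ k • cvec (x k)) T
  rw [h1, hζ, hx, pow_zero] at h2
  exact (add_right_cancel h2).symm

theorem fsum_add {ι : Type*} (T : ℕ) (ζ : ℂ) (x y : ℕ → ι → ℝ) :
    fsum T ζ (fun k => x k + y k) = fsum T ζ x + fsum T ζ y := by
  rw [fsum, fsum, fsum, ← Finset.sum_add_distrib]
  refine Finset.sum_congr rfl fun k _ => ?_
  rw [← smul_add]; congr 1; ext i; simp [cvec]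

theorem fsum_sub {ι : Type*} (T : ℕ) (ζ : ℂ) (x y : ℕ → ι → ℝ) :
    fsum T ζ (fun k => x k - y k) = fsum T ζ x - fsum T ζ y := by
  rw [fsum, fsum, fsum, ← Finset.sum_sub_distrib]
  refine Finset.sum_congr rfl fun k _ => ?_
  rw [← smul_sub]; congr 1; ext i; simp [cvec]

theorem fsum_smul {ι : Type*} (T : ℕ) (ζ : ℂ) (c : ℝ) (x : ℕ → ι → ℝ) :
    fsum T ζ (fun k => c • x k) = (c : ℂ) • fsum T ζ x := by
  rw [fsum, fsum, Finset.smul_sum]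
  refine Finset.sum_congr rfl fun k _ => ?_
  rw [smul_comm]; congr 1; ext i; simp [cvec]

theorem parseval_fsum {ι : Type*} [Fintype ι] {T : ℕ} {ω : ℂ} (hω : IsPrimitiveRoot ω T)
    (hn : ‖ω‖ = 1) (a b : ℕ → ι → ℝ) :
    ∑ j ∈ Finset.range T, star (fsum T (ω ^ j) a) ⬝ᵥ fsum T (ω ^ j) b =
    T * ∑ k ∈ Finset.range T, ((a k ⬝ᵥ b k : ℝ) : ℂ) := by
  simp only [dotProduct, Complex.ofReal_sum]
  rw [Finset.sum_comm, Finset.sum_comm (s := Finset.range T), Finset.mul_sum]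
  refine Finset.sum_congr rfl fun i _ => ?_
  rw [← parseval_roots hω hn]
  simp [fsum, cvec, Finset.sum_apply]

/-- If the frequency-domain inequality holds on the unit circle, the form sums to at most zero over a
period: by Parseval the sum is an average of values of the form at the phasors of frequency
`(ω ^ j)⁻¹`. -/
theorem periodic_sum_nonpos {d n : ℕ} {A : Matrix (Fin d) (Fin d) ℝ}
    {B : Matrix (Fin d) (Fin n) ℝ} {C : Matrix (Fin n) (Fin d) ℝ} {m L : ℝ}
    (hF : ∀ (z : ℂ) (X : Fin d → ℂ) (V : Fin n → ℂ), ‖z‖ = 1 →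
      z • X = (A.map (Complex.ofReal ·)) *ᵥ X + (B.map (Complex.ofReal ·)) *ᵥ V →
      (star (V - (m : ℂ) • ((C.map (Complex.ofReal ·)) *ᵥ X)) ⬝ᵥ
        ((L : ℂ) • ((C.map (Complex.ofReal ·)) *ᵥ X) - V)).re ≤ 0)
    {T : ℕ} (hT : 0 < T) (x : ℕ → Fin d → ℝ) (v : ℕ → Fin n → ℝ)
    (hx : ∀ k, x (k + 1) = A *ᵥ x k + B *ᵥ v k) (hper : x T = x 0) :
    ∑ k ∈ Finset.range T, (v k - m • (C *ᵥ x k)) ⬝ᵥ (L • (C *ᵥ x k) - v k) ≤ 0 := by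
  have hω := Complex.isPrimitiveRoot_exp T hT.ne'
  set ω := Complex.exp (2 * Real.pi * Complex.I / T)
  have hn : ‖ω‖ = 1 := hω.norm'_eq_one hT.ne'
  have hω0 : ω ≠ 0 := by intro h; simp [h] at hn
  have key := parseval_fsum hω hn (fun k => v k - m • (C *ᵥ x k)) fun k => L • (C *ᵥ x k) - v k
  have hle : (∑ j ∈ Finset.range T, star (fsum T (ω ^ j) fun k => v k - m • (C *ᵥ x k)) ⬝ᵥ
      fsum T (ω ^ j) fun k => L • (C *ᵥ x k) - v k).re ≤ 0 := by
    rw [Complex.re_sum]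
    refine Finset.sum_nonpos fun j _ => ?_
    have hζ : (ω ^ j) ^ T = 1 := by rw [← pow_mul, mul_comm, pow_mul, hω.pow_eq_one, one_pow]
    have hζ0 : ω ^ j ≠ 0 := pow_ne_zero _ hω0
    rw [fsum_sub, fsum_sub, fsum_smul, fsum_smul, ← map_mulVec_fsum]
    refine hF (ω ^ j)⁻¹ _ _ (by simp [hn]) ?_
    rw [map_mulVec_fsum, map_mulVec_fsum, ← fsum_add]
    simp only [← hx]
    rw [← fsum_shift hζ x hper, smul_smul, inv_mul_cancel₀ hζ0, one_smul]
  rw [key, ← Complex.ofReal_sum, ← Complex.ofReal_natCast, ← Complex.ofReal_mul,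
    Complex.ofReal_re] at hle
  have hTpos : (0 : ℝ) < T := by exact_mod_cast hT
  exact nonpos_of_mul_nonpos_right hle hTpos

/-! ### Approximation on circles, Hermitian parts, resolvents and powers -/

/-- Every point of a circle about `0` is a limit of points of that circle avoiding a given finite set. -/
theorem exists_seq_circle {S : Set ℂ} (hS : S.Finite) {z : ℂ} (hz : z ≠ 0) :
    ∃ w : ℕ → ℂ, Tendsto w atTop (nhds z) ∧ (∀ j, ‖w j‖ = ‖z‖) ∧ ∀ᶠ j in atTop, w j ∉ S := by
  let θ : ℕ → ℝ := fun j => 1 / ((j : ℝ) + 1)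
  have hθ : ∀ j, 0 < θ j ∧ θ j ≤ 1 := fun j => by
    constructor
    · simp only [θ]; positivity
    · simp only [θ]; rw [div_le_one (by positivity)]; linarith [(Nat.cast_nonneg j : (0:ℝ) ≤ j)]
  refine ⟨fun j => z * Complex.exp (θ j * Complex.I), ?_, ?_, ?_⟩
  · have h1 : Tendsto θ atTop (nhds 0) := tendsto_one_div_add_atTop_nhds_zero_nat
    have h2 : Continuous fun t : ℝ => z * Complex.exp (t * Complex.I) := by fun_prop
    simpa [Function.comp_def] using (h2.tendsto 0).comp h1
  · intro j; simp [Complex.norm_exp_ofReal_mul_I]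
  · have hinj : Function.Injective fun j => z * Complex.exp (θ j * Complex.I) := by
      intro i j hij
      have h := mul_left_cancel₀ hz hij
      rw [Complex.exp_eq_exp_iff_exists_int] at h
      obtain ⟨n, hn⟩ := h
      have h3 : θ i = θ j + n * (2 * Real.pi) := by
        have := congrArg Complex.im hn
        simpa using this
      have hn0 : n = 0 := by
        have hπ := Real.pi_gt_three
        have a1 := hθ i
        have a2 := hθ j
        by_contra hne
        rcases lt_or_gt_of_ne hne with h | h
        · have : (n : ℝ) ≤ -1 := by exact_mod_cast Int.le_sub_one_of_lt h
          nlinarith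
        · have : (1 : ℝ) ≤ n := by exact_mod_cast h
          nlinarith
      rw [hn0] at h3
      simpa [θ] using h3
    have := hinj.tendsto_cofinite.eventually hS.eventually_cofinite_notMem
    rwa [Nat.cofinite_eq_atTop] at this

theorem hermPart_posSemidef_iff {n : ℕ} (M : Matrix (Fin n) (Fin n) ℂ) :
    (((1 : ℂ) / 2) • (M + Mᴴ)).PosSemidef ↔ ∀ U : Fin n → ℂ, 0 ≤ (star U ⬝ᵥ (M *ᵥ U)).re := by
  have hst : ∀ U : Fin n → ℂ, star U ⬝ᵥ (Mᴴ *ᵥ U) = star (star U ⬝ᵥ (M *ᵥ U)) := by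
    intro U
    rw [← star_dotProduct_star, star_mulVec, star_star, dotProduct_mulVec]
  have hval : ∀ U : Fin n → ℂ, star U ⬝ᵥ ((((1 : ℂ) / 2) • (M + Mᴴ)) *ᵥ U) =
      ((star U ⬝ᵥ (M *ᵥ U)).re : ℂ) := by
    intro U
    rw [smul_mulVec, dotProduct_smul, add_mulVec, dotProduct_add, hst]
    rw [Complex.re_eq_add_conj]
    simp; ring
  rw [posSemidef_iff_dotProduct_mulVec]
  constructor
  · intro h U
    have := h.2 U
    rw [hval] at this
    exact_mod_cast this
  · intro h
    refine ⟨?_, fun U => ?_⟩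
    · unfold IsHermitian
      rw [conjTranspose_smul, conjTranspose_add, conjTranspose_conjTranspose, add_comm]
      simp
    · rw [hval]; exact_mod_cast h U

theorem isUnit_of_notMem_spectrum {d : ℕ} {M : Matrix (Fin d) (Fin d) ℂ} {z : ℂ}
    (hz : z ∉ spectrum ℂ M) : IsUnit (z • (1 : Matrix (Fin d) (Fin d) ℂ) - M).det := by
  rw [spectrum.notMem_iff, Algebra.algebraMap_eq_smul_one] at hz
  exact (isUnit_iff_isUnit_det _).mp hz

theorem continuousAt_resolvent {d : ℕ} {M : Matrix (Fin d) (Fin d) ℂ} {z : ℂ}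
    (hz : z ∉ spectrum ℂ M) (b : Fin d → ℂ) :
    ContinuousAt (fun w : ℂ => (w • (1 : Matrix (Fin d) (Fin d) ℂ) - M)⁻¹ *ᵥ b) z := by
  have hdet := (isUnit_of_notMem_spectrum hz).ne_zero
  have hc : Continuous fun w : ℂ => w • (1 : Matrix (Fin d) (Fin d) ℂ) - M := by fun_prop
  have h1 : ContinuousAt (fun w : ℂ => (w • (1 : Matrix (Fin d) (Fin d) ℂ) - M)⁻¹) z := by
    simp only [inv_def, Ring.inverse_eq_inv']
    exact (hc.matrix_det.continuousAt.inv₀ hdet).smul hc.matrix_adjugate.continuousAt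
  exact (Continuous.matrix_mulVec continuous_id continuous_const).continuousAt.comp h1

theorem resolvent_eq_iff {d : ℕ} {M : Matrix (Fin d) (Fin d) ℂ} {z : ℂ}
    (hz : z ∉ spectrum ℂ M) (X b : Fin d → ℂ) :
    z • X = M *ᵥ X + b ↔ X = (z • (1 : Matrix (Fin d) (Fin d) ℂ) - M)⁻¹ *ᵥ b := by
  have hdet := isUnit_of_notMem_spectrum hz
  have h : z • X = M *ᵥ X + b ↔ (z • (1 : Matrix (Fin d) (Fin d) ℂ) - M) *ᵥ X = b := by
    rw [sub_mulVec, smul_mulVec, one_mulVec, sub_eq_iff_eq_add, add_comm]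
  rw [h]
  constructor
  · rintro rfl
    rw [mulVec_mulVec, nonsing_inv_mul _ hdet, one_mulVec]
  · rintro rfl
    rw [mulVec_mulVec, mul_nonsing_inv _ hdet, one_mulVec]

section schur
open scoped Matrix.Norms.L2Operator

/-- For a `ρ`-Schur matrix the powers of `ρ⁻¹ M` have summable operator norms, by the Gelfand formula for
the complexification. -/
theorem summable_norm_pow_of_spectrum {d : ℕ} (M : Matrix (Fin d) (Fin d) ℝ) {ρ : ℝ} (hρ : 0 < ρ)
    (hM : ∀ z ∈ spectrum ℂ (M.map (Complex.ofReal ·)), ‖z‖ < ρ) :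
    Summable fun k => ‖(Matrix.toEuclideanCLM (𝕜 := ℝ) (ρ⁻¹ • M)) ^ k‖ := by
  rcases Nat.eq_zero_or_pos d with rfl | hd
  · have : ∀ T : EuclideanSpace ℝ (Fin 0) →L[ℝ] EuclideanSpace ℝ (Fin 0), ‖T‖ = 0 := fun T => by
      rw [norm_eq_zero]; ext x i; exact i.elim0
    simp only [this]; exact summable_zero
  have : Nonempty (Fin d) := ⟨⟨0, hd⟩⟩
  set Mc := M.map (Complex.ofReal ·) with hMc
  lift ρ to NNReal using hρ.le
  have hrad : spectralRadius ℂ Mc < ρ := spectrum.spectralRadius_lt_of_forall_lt Mc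
    (fun z hz => by exact_mod_cast hM z hz)
  obtain ⟨r, hr1, hr2⟩ := ENNReal.lt_iff_exists_nnreal_btwn.mp hrad
  have hr2' : r < ρ := by exact_mod_cast hr2
  have hG := spectrum.pow_nnnorm_pow_one_div_tendsto_nhds_spectralRadius Mc
  have hev : ∀ᶠ k : ℕ in atTop, ‖Mc ^ k‖ ≤ (r : ℝ) ^ k := by
    filter_upwards [hG.eventually (gt_mem_nhds hr1), eventually_gt_atTop 0] with k hk hk0
    have hk0' : (0:ℝ) < k := by exact_mod_cast hk0
    have h1 := ENNReal.rpow_le_rpow hk.le hk0'.le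
    rw [← ENNReal.rpow_mul, one_div, inv_mul_cancel₀ hk0'.ne', ENNReal.rpow_one,
      ENNReal.rpow_natCast] at h1
    exact_mod_cast h1
  have hnorm : ∀ k, ‖Matrix.toEuclideanCLM (n := Fin d) (𝕜 := ℝ) (M ^ k)‖ ≤ ‖Mc ^ k‖ := by
    intro k
    have hpow : Mc ^ k = (M ^ k).map (Complex.ofReal ·) :=
      ((Complex.ofRealHom.mapMatrix (m := Fin d)).map_pow M k).symm
    refine ContinuousLinearMap.opNorm_le_bound _ (norm_nonneg _) fun x => ?_
    have h := l2_opNorm_mulVec (Mc ^ k) (WithLp.toLp 2 fun i => ((x i : ℝ) : ℂ))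
    have h1 : (Mc ^ k) *ᵥ (fun i => ((x i : ℝ) : ℂ)) = fun i => (((M ^ k *ᵥ x) i : ℝ) : ℂ) := by
      rw [hpow]; ext i; simp [mulVec, dotProduct]
    simp only [h1] at h
    have hv : (Matrix.toEuclideanCLM (n := Fin d) (𝕜 := ℝ) (M ^ k) x).ofLp = M ^ k *ᵥ x.ofLp := rfl
    rw [EuclideanSpace.norm_eq, EuclideanSpace.norm_eq x, hv]
    simpa [EuclideanSpace.norm_eq] using h
  have hρ' : (0 : ℝ) < ρ := hρ
  have hg : Summable fun k : ℕ => ((r : ℝ) / ρ) ^ k := by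
    refine summable_geometric_of_lt_one (by positivity) ?_
    rw [div_lt_one hρ']; exact_mod_cast hr2'
  refine summable_of_isBigO_nat hg (Asymptotics.IsBigO.of_bound 1 ?_)
  filter_upwards [hev] with k hk
  rw [norm_norm, one_mul, ← map_pow, smul_pow, map_smul, norm_smul, div_pow, norm_div, norm_pow,
    norm_pow, norm_pow, norm_inv, Real.norm_of_nonneg hρ'.le, Real.norm_of_nonneg r.coe_nonneg,
    inv_pow, mul_comm, ← div_eq_mul_inv]
  gcongr
  exact (hnorm k).trans hk
end schur

/-! ### Exponentially growing trajectories -/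

/-- The entrywise real part of a complex vector. -/
def reVec {ι : Type*} (X : ι → ℂ) : ι → ℝ := fun i => (X i).re

theorem reVec_map_mulVec {ι κ : Type*} [Fintype κ] (A : Matrix ι κ ℝ) (X : κ → ℂ) :
    reVec ((A.map (Complex.ofReal ·)) *ᵥ X) = A *ᵥ reVec X := by
  ext i; simp [reVec, mulVec, dotProduct, Complex.re_sum]

theorem reVec_dotProduct {ι : Type*} [Fintype ι] (a b : ι → ℂ) :
    reVec a ⬝ᵥ reVec b = (1 / 2) * ((star a ⬝ᵥ b).re + (a ⬝ᵥ b).re) := by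
  simp only [dotProduct, Complex.re_sum, ← Finset.sum_add_distrib, Finset.mul_sum]
  refine Finset.sum_congr rfl fun i _ => ?_
  simp [reVec]; ring

/-- The partial sums of `R ^ k q + Re (W ^ k s)` with `|W| = R > 1` diverge to `+∞` as soon as the geometric
sum of the first term beats that of the second. -/
theorem tendsto_sum_growth {q R : ℝ} {s W : ℂ} (hR : 1 < R) (hW : ‖W‖ = R)
    (h : ‖s‖ * (R - 1) < q * ‖W - 1‖) :
    Tendsto (fun N => ∑ k ∈ Finset.range N, (1 / 2) * (R ^ k * q + (W ^ k * s).re)) atTop atTop := by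
  have hR1 : 0 < R - 1 := by linarith
  have hW1 : W ≠ 1 := by rintro rfl; simp at hW; linarith
  have hW0 : 0 < ‖W - 1‖ := norm_pos_iff.mpr (sub_ne_zero.mpr hW1)
  obtain ⟨δ, hδ⟩ : ∃ δ, δ = q / (R - 1) - ‖s‖ / ‖W - 1‖ := ⟨_, rfl⟩
  have hδ0 : 0 < δ := by
    rw [hδ, sub_pos, div_lt_div_iff₀ hW0 hR1]; exact h
  have hlow : ∀ N, (1 / 2) * (R ^ N * δ - (q / (R - 1) + ‖s‖ / ‖W - 1‖)) ≤
      ∑ k ∈ Finset.range N, (1 / 2) * (R ^ k * q + (W ^ k * s).re) := by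
    intro N
    rw [← Finset.mul_sum, Finset.sum_add_distrib, ← Finset.sum_mul, ← Complex.re_sum,
      ← Finset.sum_mul, geom_sum_eq hR.ne', geom_sum_eq hW1]
    have h1 : -((R ^ N + 1) / ‖W - 1‖ * ‖s‖) ≤ ((W ^ N - 1) / (W - 1) * s).re := by
      refine (neg_le_neg ?_).trans (neg_le_of_abs_le (Complex.abs_re_le_norm _))
      rw [norm_mul, norm_div]
      gcongr
      refine (norm_sub_le _ _).trans ?_
      rw [norm_pow, hW, norm_one]
    have h2 : R ^ N * δ - (q / (R - 1) + ‖s‖ / ‖W - 1‖) =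
        (R ^ N - 1) / (R - 1) * q - (R ^ N + 1) / ‖W - 1‖ * ‖s‖ := by rw [hδ]; ring
    linarith
  refine tendsto_atTop_mono hlow ?_
  refine Tendsto.const_mul_atTop (by norm_num) (tendsto_atTop_add_const_right _ _ ?_)
  exact (tendsto_pow_atTop_atTop_of_one_lt hR).atTop_mul_const hδ0

/-- For a phasor `(X, U)` at a non-real frequency `w` with `|w| > ρ`, the partial sums of the weighted form
along `Re (w ^ k X)`, `Re (w ^ k U)` tend to `+∞`. Restarted at an index where the partial sum is
minimal, the trajectory satisfies the constraint although it grows faster than `ρ ^ k`. -/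
theorem growth_contradiction {d n : ℕ} {A : Matrix (Fin d) (Fin d) ℝ}
    {B : Matrix (Fin d) (Fin n) ℝ} {C : Matrix (Fin n) (Fin d) ℝ} {m L ρ : ℝ} (hρ : 0 < ρ)
    (hyp : ∀ (x : ℕ → Fin d → ℝ) (u : ℕ → Fin n → ℝ),
      (∀ k, x (k + 1) = A *ᵥ x k + B *ᵥ u k) →
      (∀ N, 0 ≤ ∑ k ∈ Finset.range (N + 1), (ρ ^ (2 * k))⁻¹ *
        ((u k - m • (C *ᵥ x k)) ⬝ᵥ (L • (C *ᵥ x k) - u k))) →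
      ∃ D, ∀ k i, |x k i| ≤ D * ρ ^ k)
    {w : ℂ} (hw : ρ < ‖w‖) (him : w.im ≠ 0) {X : Fin d → ℂ} {U : Fin n → ℂ} (hX : X ≠ 0)
    (hXU : w • X = (A.map (Complex.ofReal ·)) *ᵥ X + (B.map (Complex.ofReal ·)) *ᵥ U)
    {a b : Fin n → ℂ} (ha : a = U - (m : ℂ) • ((C.map (Complex.ofReal ·)) *ᵥ X))
    (hb : b = (L : ℂ) • ((C.map (Complex.ofReal ·)) *ᵥ X) - U)
    (hq : ‖a ⬝ᵥ b‖ * ((‖w‖ / ρ) ^ 2 - 1) < (star a ⬝ᵥ b).re * ‖(w / ρ) ^ 2 - 1‖) : False := by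
  let x : ℕ → Fin d → ℝ := fun k => reVec (w ^ k • X)
  let u : ℕ → Fin n → ℝ := fun k => reVec (w ^ k • U)
  have hx : ∀ k, x (k + 1) = A *ᵥ x k + B *ᵥ u k := by
    intro k
    simp only [x, u]
    rw [← reVec_map_mulVec, ← reVec_map_mulVec, pow_succ, mul_smul, hXU, mulVec_smul, mulVec_smul,
      smul_add]
    ext i; simp [reVec]
  have hR : 1 < (‖w‖ / ρ) ^ 2 := one_lt_pow₀ ((one_lt_div hρ).mpr hw) two_ne_zero
  have hW : ‖(w / ρ) ^ 2‖ = (‖w‖ / ρ) ^ 2 := by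
    rw [norm_pow, norm_div, Complex.norm_real, Real.norm_of_nonneg hρ.le]
  have hf : ∀ k, (ρ ^ (2 * k))⁻¹ * ((u k - m • (C *ᵥ x k)) ⬝ᵥ (L • (C *ᵥ x k) - u k)) =
      (1 / 2) * (((‖w‖ / ρ) ^ 2) ^ k * (star a ⬝ᵥ b).re + (((w / ρ) ^ 2) ^ k * (a ⬝ᵥ b)).re) := by
    intro k
    have h1 : u k - m • (C *ᵥ x k) = reVec (w ^ k • a) := by
      simp only [x, u]
      rw [← reVec_map_mulVec, ha, smul_sub, mulVec_smul, smul_comm (w ^ k)]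
      ext i; simp [reVec]
    have h2 : L • (C *ᵥ x k) - u k = reVec (w ^ k • b) := by
      simp only [x, u]
      rw [← reVec_map_mulVec, hb, smul_sub, mulVec_smul, smul_comm (w ^ k)]
      ext i; simp [reVec]
    rw [h1, h2, reVec_dotProduct]
    have h3 : star (w ^ k • a) ⬝ᵥ (w ^ k • b) = ((‖w‖ ^ 2) ^ k : ℝ) * (star a ⬝ᵥ b) := by
      rw [star_smul, smul_dotProduct, dotProduct_smul, smul_smul, smul_eq_mul]
      congr 1
      rw [star_pow, ← mul_pow]
      have : star w * w = ((‖w‖ ^ 2 : ℝ) : ℂ) := by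
        rw [Complex.ofReal_pow]; exact Complex.conj_mul' w
      rw [this, ← Complex.ofReal_pow]
    have h4 : (w ^ k • a) ⬝ᵥ (w ^ k • b) = (w ^ 2) ^ k * (a ⬝ᵥ b) := by
      rw [smul_dotProduct, dotProduct_smul, smul_smul, smul_eq_mul]; ring
    have h5 : ((w / ρ) ^ 2) ^ k * (a ⬝ᵥ b) =
        ((ρ ^ (2 * k))⁻¹ : ℝ) * ((w ^ 2) ^ k * (a ⬝ᵥ b)) := by
      push_cast
      rw [div_pow, div_pow, pow_mul]; ring
    rw [h3, h4, h5, Complex.re_ofReal_mul, Complex.re_ofReal_mul, div_pow, div_pow, pow_mul ρ]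
    ring
  let P : ℕ → ℝ := fun N => ∑ k ∈ Finset.range N, (ρ ^ (2 * k))⁻¹ *
        ((u k - m • (C *ᵥ x k)) ⬝ᵥ (L • (C *ᵥ x k) - u k))
  have hP : Tendsto P atTop atTop := by
    simp only [P, hf]
    exact tendsto_sum_growth hR hW hq
  obtain ⟨k₀, hk₀⟩ : ∃ k₀, ∀ k, P k₀ ≤ P k := by
    rw [← Nat.cofinite_eq_atTop] at hP
    exact hP.exists_forall_le
  obtain ⟨D, hD⟩ := hyp (fun k => x (k₀ + k)) (fun k => u (k₀ + k)) (fun k => hx (k₀ + k)) (by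
    intro N
    have h1 := hk₀ (k₀ + (N + 1))
    simp only [P] at h1
    rw [Finset.sum_range_add] at h1
    have h2 : 0 ≤ ρ ^ (2 * k₀) * ∑ k ∈ Finset.range (N + 1), (ρ ^ (2 * (k₀ + k)))⁻¹ *
        ((u (k₀ + k) - m • (C *ᵥ x (k₀ + k))) ⬝ᵥ (L • (C *ᵥ x (k₀ + k)) - u (k₀ + k))) := by
      have : 0 < ρ ^ (2 * k₀) := by positivity
      refine mul_nonneg this.le ?_
      linarith
    rw [Finset.mul_sum] at h2
    refine h2.trans_eq (Finset.sum_congr rfl fun k _ => ?_)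
    have hne : ρ ≠ 0 := hρ.ne'
    rw [← mul_assoc]
    congr 1
    rw [mul_add, pow_add]
    field_simp)
  obtain ⟨i, hi⟩ := Function.ne_iff.mp hX
  have hi : X i ≠ 0 := hi
  -- Since `w.im ≠ 0`, the real parts of `ζ` and `w ζ` control `ζ.im`.
  have hbd : ∀ k, ‖w ^ (k₀ + k) * X i‖ ≤ (D + (D * ρ + |w.re| * D) / |w.im|) * ρ ^ k := by
    intro k
    set ζ := w ^ (k₀ + k) * X i with hζ
    have h1 : |ζ.re| ≤ D * ρ ^ k := hD k i
    have h2 : |(w * ζ).re| ≤ D * ρ ^ (k + 1) := by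
      have := hD (k + 1) i
      have he : x (k₀ + (k + 1)) i = (w * ζ).re := by
        simp only [x, reVec, hζ, Pi.smul_apply, smul_eq_mul]
        congr 1; ring
      rwa [he] at this
    have him' : 0 < |w.im| := abs_pos.mpr him
    have h3 : |w.im| * |ζ.im| ≤ (D * ρ + |w.re| * D) * ρ ^ k := by
      rw [← abs_mul]
      have : w.im * ζ.im = w.re * ζ.re - (w * ζ).re := by
        rw [Complex.mul_re w ζ]; ring
      rw [this]
      refine (abs_sub _ _).trans ?_
      rw [abs_mul]
      have : |w.re| * |ζ.re| ≤ |w.re| * (D * ρ ^ k) := by gcongr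
      rw [pow_succ] at h2
      linarith
    have h4 : |ζ.im| ≤ (D * ρ + |w.re| * D) / |w.im| * ρ ^ k := by
      rw [div_mul_eq_mul_div, le_div_iff₀ him']; linarith
    linarith [Complex.norm_le_abs_re_add_abs_im ζ]
  obtain ⟨K, hK⟩ : ∃ K, K = D + (D * ρ + |w.re| * D) / |w.im| := ⟨_, rfl⟩
  rw [← hK] at hbd
  have hc0 : 0 < ‖w‖ ^ k₀ * ‖X i‖ := by
    have : 0 < ‖w‖ := hρ.trans hw
    have := norm_pos_iff.mpr hi
    positivity
  obtain ⟨k, hk⟩ := pow_unbounded_of_one_lt (K / (‖w‖ ^ k₀ * ‖X i‖)) ((one_lt_div hρ).mpr hw)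
  have h := hbd k
  rw [div_lt_iff₀ hc0, div_pow, div_mul_eq_mul_div, lt_div_iff₀ (by positivity)] at hk
  rw [norm_mul, norm_pow, pow_add] at h
  nlinarith

/-! ### The sector constraint and the frequency-domain inequality -/

theorem mulVecE_ofLp {ι κ : Type*} [Fintype ι] [Fintype κ] [DecidableEq κ]
    (A : Matrix ι κ ℝ) (v : EuclideanSpace ℝ κ) : (mulVecE A v).ofLp = A *ᵥ v.ofLp := rfl

theorem sectorForm_eq_dotProduct {n : ℕ} (m L : ℝ) (y v : EuclideanSpace ℝ (Fin n)) :
    sectorForm m L y v = (v.ofLp - m • y.ofLp) ⬝ᵥ (L • y.ofLp - v.ofLp) := by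
  rw [sectorForm, EuclideanSpace.inner_eq_star_dotProduct, dotProduct_comm]
  simp

/-- The quadratic form of the sector matrix is `2 ⟪u - m y, L y - u⟫` with `y = C x`. -/
theorem iqc_form_eq {d n : ℕ} (C : Matrix (Fin n) (Fin d) ℝ) (m L : ℝ)
    (x : EuclideanSpace ℝ (Fin d)) (u : EuclideanSpace ℝ (Fin n)) :
    ⟪mulVecE ((-(2 * L * m)) • (Cᵀ * C)) x, x⟫ + 2 * ⟪mulVecE ((L + m) • C) x, u⟫ +
      ⟪mulVecE ((-2 : ℝ) • (1 : Matrix (Fin n) (Fin n) ℝ)) u, u⟫ =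
    2 * sectorForm m L (mulVecE C x) u := by
  rw [sectorForm_eq_dotProduct]
  simp only [EuclideanSpace.inner_eq_star_dotProduct, mulVecE_ofLp, star_trivial, smul_mulVec,
    dotProduct_smul, sub_dotProduct, dotProduct_sub, smul_dotProduct, one_mulVec, smul_eq_mul,
    ← mulVec_mulVec]
  have h1 : x.ofLp ⬝ᵥ (Cᵀ *ᵥ (C *ᵥ x.ofLp)) = (C *ᵥ x.ofLp) ⬝ᵥ (C *ᵥ x.ofLp) := by
    rw [dotProduct_mulVec, vecMul_transpose]
  rw [h1, dotProduct_comm (C *ᵥ x.ofLp) u.ofLp]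
  ring

theorem transfer_form {d n : ℕ} {A : Matrix (Fin d) (Fin d) ℝ} {B : Matrix (Fin d) (Fin n) ℝ}
    {C : Matrix (Fin n) (Fin d) ℝ} {z : ℂ} (hz : z ∉ spectrum ℂ (A.map (Complex.ofReal ·)))
    {X : Fin d → ℂ} {U : Fin n → ℂ}
    (h : z • X = (A.map (Complex.ofReal ·)) *ᵥ X + (B.map (Complex.ofReal ·)) *ᵥ U) (m L : ℂ) :
    star U ⬝ᵥ (((1 - m • transferH A B C z)ᴴ * (1 - L • transferH A B C z)) *ᵥ U) =
      -(star (U - m • ((C.map (Complex.ofReal ·)) *ᵥ X)) ⬝ᵥ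
        (L • ((C.map (Complex.ofReal ·)) *ᵥ X) - U)) := by
  rw [resolvent_eq_iff hz] at h
  have hH : transferH A B C z *ᵥ U = (C.map (Complex.ofReal ·)) *ᵥ X := by
    rw [transferH, h, mulVec_mulVec, mulVec_mulVec, Matrix.mul_assoc]
  have h1 : ∀ c : ℂ, (1 - c • transferH A B C z) *ᵥ U =
      U - c • ((C.map (Complex.ofReal ·)) *ᵥ X) := by
    intro c; rw [sub_mulVec, one_mulVec, smul_mulVec, hH]
  rw [← mulVec_mulVec, dotProduct_mulVec, ← star_mulVec, h1, h1, ← dotProduct_neg, neg_sub]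

/-- The frequency-domain inequality in terms of phasors: if `z X = A X + B U` with `|z| = ρ` and `z`
not an eigenvalue of `A`, then `Re ((U - m C X)* (L C X - U)) ≤ 0`. Writing `X = (z - A)⁻¹ B U`
turns this into the condition on `H(z)`; see `circleIneq_iff`. -/
def CircleIneq {d n : ℕ} (A : Matrix (Fin d) (Fin d) ℝ) (B : Matrix (Fin d) (Fin n) ℝ)
    (C : Matrix (Fin n) (Fin d) ℝ) (m L ρ : ℝ) : Prop :=
  ∀ (z : ℂ) (X : Fin d → ℂ) (U : Fin n → ℂ), ‖z‖ = ρ →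
    z ∉ spectrum ℂ (A.map (Complex.ofReal ·)) →
    z • X = (A.map (Complex.ofReal ·)) *ᵥ X + (B.map (Complex.ofReal ·)) *ᵥ U →
    (star (U - (m : ℂ) • ((C.map (Complex.ofReal ·)) *ᵥ X)) ⬝ᵥ
      ((L : ℂ) • ((C.map (Complex.ofReal ·)) *ᵥ X) - U)).re ≤ 0

theorem circleIneq_iff {d n : ℕ} (A : Matrix (Fin d) (Fin d) ℝ) (B : Matrix (Fin d) (Fin n) ℝ)
    (C : Matrix (Fin n) (Fin d) ℝ) (m L ρ : ℝ) :
    CircleIneq A B C m L ρ ↔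
      ∀ z : ℂ, ‖z‖ = ρ → z ∉ spectrum ℂ (A.map (Complex.ofReal ·)) →
        (((1 : ℂ) / 2) •
          (((1 - (m : ℂ) • transferH A B C z)ᴴ * (1 - (L : ℂ) • transferH A B C z)) +
           ((1 - (m : ℂ) • transferH A B C z)ᴴ *
             (1 - (L : ℂ) • transferH A B C z))ᴴ)).PosSemidef := by
  simp only [hermPart_posSemidef_iff]
  constructor
  · intro h z hz hzA U
    have hX := (resolvent_eq_iff hzA _ ((B.map (Complex.ofReal ·)) *ᵥ U)).mpr rfl
    rw [transfer_form hzA hX, Complex.neg_re]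
    linarith [h z _ U hz hzA hX]
  · intro h z X U hz hzA hX
    have := h z hz hzA U
    rw [transfer_form hzA hX, Complex.neg_re] at this
    linarith

/-! ### Sufficiency of the circle inequality -/

/-- The circle inequality is inherited by the normalized closed loop `ρ⁻¹ (A + κ B C)` with sector
`[m - κ, L - κ]`, now on the whole unit circle: the closed loop has no eigenvalue there, so its
phasors depend continuously on `z` and the finitely many eigenvalues of `A` can be approached from
other points of the circle. -/
theorem CircleIneq.closedLoop {d n : ℕ} {A : Matrix (Fin d) (Fin d) ℝ}
    {B : Matrix (Fin d) (Fin n) ℝ} {C : Matrix (Fin n) (Fin d) ℝ} {m L ρ κ : ℝ} (hρ : 0 < ρ)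
    (hS : IsSchur ρ (A + κ • (B * C))) (h : CircleIneq A B C m L ρ)
    (z : ℂ) (X : Fin d → ℂ) (V : Fin n → ℂ) (hz : ‖z‖ = 1)
    (hX : z • X = ((ρ⁻¹ • (A + κ • (B * C))).map (Complex.ofReal ·)) *ᵥ X +
      ((ρ⁻¹ • B).map (Complex.ofReal ·)) *ᵥ V) :
    (star (V - ((m - κ : ℝ) : ℂ) • ((C.map (Complex.ofReal ·)) *ᵥ X)) ⬝ᵥ
      (((L - κ : ℝ) : ℂ) • ((C.map (Complex.ofReal ·)) *ᵥ X) - V)).re ≤ 0 := by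
  have hρc : (ρ : ℂ) ≠ 0 := by exact_mod_cast hρ.ne'
  have hsm : ∀ {p : ℕ} (M : Matrix (Fin d) (Fin p) ℝ), (ρ⁻¹ • M).map (Complex.ofReal ·) =
      (ρ : ℂ)⁻¹ • M.map (Complex.ofReal ·) := by
    intro p M; ext i j; simp
  have hcl : (A + κ • (B * C)).map (Complex.ofReal ·) = A.map (Complex.ofReal ·) +
      (κ : ℂ) • (B.map (Complex.ofReal ·) * C.map (Complex.ofReal ·)) := by
    ext i j; simp [Matrix.mul_apply]
  set Mc := (A + κ • (B * C)).map (Complex.ofReal ·) with hMc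
  set Bc := B.map (Complex.ofReal ·) with hBc
  set Cc := C.map (Complex.ofReal ·) with hCc
  have hnot : ∀ w : ℂ, ‖w‖ = ρ → w ∉ spectrum ℂ Mc := fun w hw hmem => (hS w hmem).ne hw
  have hw : ‖(ρ : ℂ) * z‖ = ρ := by simp [hz, abs_of_pos hρ]
  have hX' : ((ρ : ℂ) * z) • X = Mc *ᵥ X + Bc *ᵥ V := by
    rw [mul_smul, hX, hsm, hsm, smul_mulVec, smul_mulVec, smul_add, smul_smul, smul_smul,
      mul_inv_cancel₀ hρc, one_smul, one_smul]
  have hXe := (resolvent_eq_iff (hnot _ hw) _ _).mp hX'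
  obtain ⟨w, hwt, hwn, hwS⟩ := exists_seq_circle
    (Matrix.finite_spectrum (A.map (Complex.ofReal ·))) (z := (ρ : ℂ) * z)
    (by rw [← norm_pos_iff, hw]; exact hρ)
  rw [hw] at hwn
  let Y : ℂ → Fin d → ℂ := fun w => (w • (1 : Matrix (Fin d) (Fin d) ℂ) - Mc)⁻¹ *ᵥ (Bc *ᵥ V)
  have hYt : Tendsto (fun j => Y (w j)) atTop (nhds X) := by
    rw [hXe]
    exact (continuousAt_resolvent (hnot _ hw) (Bc *ᵥ V)).tendsto.comp hwt
  let g : (Fin d → ℂ) → ℝ := fun X => (star (V - ((m - κ : ℝ) : ℂ) • (Cc *ᵥ X)) ⬝ᵥ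
      (((L - κ : ℝ) : ℂ) • (Cc *ᵥ X) - V)).re
  have hg : Continuous g := by
    have h1 : Continuous fun X : Fin d → ℂ => Cc *ᵥ X :=
      Continuous.matrix_mulVec continuous_const continuous_id
    have h2 : ∀ c : ℂ, Continuous fun X : Fin d → ℂ => c • (Cc *ᵥ X) := fun c => h1.const_smul c
    have h3 : Continuous fun X : Fin d → ℂ => star (V - ((m - κ : ℝ) : ℂ) • (Cc *ᵥ X)) :=
      (continuous_const.sub (h2 _)).star
    have h4 : Continuous fun X : Fin d → ℂ => ((L - κ : ℝ) : ℂ) • (Cc *ᵥ X) - V :=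
      (h2 _).sub continuous_const
    exact Complex.continuous_re.comp (h3.dotProduct h4)
  refine le_of_tendsto ((hg.tendsto X).comp hYt) ?_
  filter_upwards [hwS] with j hj
  have hYj : w j • Y (w j) = Mc *ᵥ Y (w j) + Bc *ᵥ V :=
    (resolvent_eq_iff (hnot _ (hwn j)) _ _).mpr rfl
  change g (Y (w j)) ≤ 0
  generalize Y (w j) = Yj at hYj ⊢
  have hYA : w j • Yj = A.map (Complex.ofReal ·) *ᵥ Yj + Bc *ᵥ (V + (κ : ℂ) • (Cc *ᵥ Yj)) := by
    rw [hYj, hcl, add_mulVec, smul_mulVec, mulVec_add, mulVec_smul, mulVec_mulVec]; abel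
  have hle : (star (V + (κ : ℂ) • (Cc *ᵥ Yj) - (m : ℂ) • (Cc *ᵥ Yj)) ⬝ᵥ
      ((L : ℂ) • (Cc *ᵥ Yj) - (V + (κ : ℂ) • (Cc *ᵥ Yj)))).re ≤ 0 :=
    h (w j) Yj (V + (κ : ℂ) • (Cc *ᵥ Yj)) (hwn j) hj hYA
  have e1 : V - ((m - κ : ℝ) : ℂ) • (Cc *ᵥ Yj) =
      V + (κ : ℂ) • (Cc *ᵥ Yj) - (m : ℂ) • (Cc *ᵥ Yj) := by push_cast; module
  have e2 : ((L - κ : ℝ) : ℂ) • (Cc *ᵥ Yj) - V =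
      (L : ℂ) • (Cc *ᵥ Yj) - (V + (κ : ℂ) • (Cc *ᵥ Yj)) := by push_cast; module
  simp only [g]
  rw [e1, e2]
  exact hle

/-- Sufficiency: the substitution `v(k) = ρ⁻ᵏ (u(k) - κ C x(k))`, `x(k) ↦ ρ⁻ᵏ x(k)` reduces the claim to
the closed loop with a sector containing `0`. -/
theorem hyperstable_of_circleIneq {d n : ℕ} {A : Matrix (Fin d) (Fin d) ℝ}
    {B : Matrix (Fin d) (Fin n) ℝ} {C : Matrix (Fin n) (Fin d) ℝ} {m L ρ κ : ℝ} (hmL : m < L)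
    (hρ : 0 < ρ) (hκ : κ ∈ Set.Icc m L) (hS : IsSchur ρ (A + κ • (B * C)))
    (h : CircleIneq A B C m L ρ) :
    Hyperstable A B ((-(2 * L * m)) • (Cᵀ * C)) ((L + m) • C)
        ((-2 : ℝ) • (1 : Matrix (Fin n) (Fin n) ℝ)) ρ := by
  let Al := Matrix.toEuclideanCLM (n := Fin d) (𝕜 := ℝ) (ρ⁻¹ • (A + κ • (B * C)))
  let Bl := (Matrix.toEuclideanLin (ρ⁻¹ • B)).toContinuousLinearMap
  let Cl := (Matrix.toEuclideanLin C).toContinuousLinearMap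
  have hAl : ∀ x, (Al x).ofLp = (ρ⁻¹ • (A + κ • (B * C))) *ᵥ x.ofLp := fun _ => rfl
  have hBl : ∀ x, (Bl x).ofLp = (ρ⁻¹ • B) *ᵥ x.ofLp := fun _ => rfl
  have hCl : ∀ x, (Cl x).ofLp = C *ᵥ x.ofLp := fun _ => rfl
  have hP : PeriodicDissipative Al Bl Cl (m - κ) (L - κ) := by
    intro T hT x v hx hper
    simp only [sectorForm_eq_dotProduct, hCl]
    refine periodic_sum_nonpos (CircleIneq.closedLoop hρ hS h) hT (fun k => (x k).ofLp)
      (fun k => (v k).ofLp) (fun k => ?_) (by rw [hper])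
    rw [hx, WithLp.ofLp_add, hAl, hBl]
  obtain ⟨c, hc, hbd⟩ := bounded_of_periodicDissipative (by linarith) (by linarith [hκ.1])
    (by linarith [hκ.2]) (summable_norm_pow_of_spectrum _ hρ hS) hP
  refine ⟨c, hc, fun x u hx hI k => ?_⟩
  have hpow : ∀ k, ρ ^ k ≠ 0 := fun k => pow_ne_zero _ hρ.ne'
  have := hbd (fun k => (ρ ^ k)⁻¹ • x k) (fun k => (ρ ^ k)⁻¹ • (u k - κ • mulVecE C (x k)))
    ?_ ?_ k
  · rw [norm_smul, norm_inv, norm_pow, Real.norm_of_nonneg hρ.le, pow_zero, inv_one, one_smul,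
      inv_mul_le_iff₀ (by positivity)] at this
    linarith
  · intro k
    rw [hx k]
    apply WithLp.ofLp_injective
    change _ = (Al _ + Bl _).ofLp
    simp only [WithLp.ofLp_add, WithLp.ofLp_smul, hAl, hBl, mulVecE_ofLp, WithLp.ofLp_sub,
      mulVec_smul, smul_mulVec, mulVec_sub, add_mulVec, ← mulVec_mulVec, pow_succ, mul_inv,
      smul_add, smul_sub, smul_smul]
    module
  · intro N
    have h1 := hI N
    simp only [iqc_form_eq] at h1
    have h2 : ∑ k ∈ Finset.range (N + 1), (ρ ^ (2 * k))⁻¹ *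
        (2 * sectorForm m L (mulVecE C (x k)) (u k)) =
        2 * ∑ k ∈ Finset.range (N + 1), sectorForm (m - κ) (L - κ) (Cl ((ρ ^ k)⁻¹ • x k))
          ((ρ ^ k)⁻¹ • (u k - κ • mulVecE C (x k))) := by
      rw [Finset.mul_sum]
      refine Finset.sum_congr rfl fun k _ => ?_
      have e1 : Cl ((ρ ^ k)⁻¹ • x k) = (ρ ^ k)⁻¹ • mulVecE C (x k) := by rw [map_smul]; rfl
      rw [e1, sectorForm, sectorForm]
      have e2 : (ρ ^ k)⁻¹ • (u k - κ • mulVecE C (x k)) - (m - κ) • (ρ ^ k)⁻¹ • mulVecE C (x k) =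
          (ρ ^ k)⁻¹ • (u k - m • mulVecE C (x k)) := by module
      have e3 : (L - κ) • (ρ ^ k)⁻¹ • mulVecE C (x k) - (ρ ^ k)⁻¹ • (u k - κ • mulVecE C (x k)) =
          (ρ ^ k)⁻¹ • (L • mulVecE C (x k) - u k) := by module
      rw [e2, e3, real_inner_smul_left, real_inner_smul_right, two_mul k, pow_add, mul_inv]
      ring
    rw [h2] at h1
    linarith

/-! ### Necessity of the circle inequality -/

/-- Hyperstability for the sector constraint, restated coordinatewise for plain vectors. -/
theorem Hyperstable.exists_bound {d n : ℕ} {A : Matrix (Fin d) (Fin d) ℝ}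
    {B : Matrix (Fin d) (Fin n) ℝ} {C : Matrix (Fin n) (Fin d) ℝ} {m L ρ : ℝ}
    (h : Hyperstable A B ((-(2 * L * m)) • (Cᵀ * C)) ((L + m) • C)
        ((-2 : ℝ) • (1 : Matrix (Fin n) (Fin n) ℝ)) ρ)
    (x : ℕ → Fin d → ℝ) (u : ℕ → Fin n → ℝ) (hx : ∀ k, x (k + 1) = A *ᵥ x k + B *ᵥ u k)
    (hI : ∀ N, 0 ≤ ∑ k ∈ Finset.range (N + 1), (ρ ^ (2 * k))⁻¹ *
        ((u k - m • (C *ᵥ x k)) ⬝ᵥ (L • (C *ᵥ x k) - u k))) :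
    ∃ D, ∀ k i, |x k i| ≤ D * ρ ^ k := by
  obtain ⟨c, hc, hyp⟩ := h
  have := hyp (fun k => WithLp.toLp 2 (x k)) (fun k => WithLp.toLp 2 (u k)) ?_ ?_
  · refine ⟨c * ‖WithLp.toLp 2 (x 0)‖, fun k i => ?_⟩
    refine (PiLp.norm_apply_le (WithLp.toLp 2 (x k)) i).trans ((this k).trans_eq ?_)
    ring
  · intro k
    apply WithLp.ofLp_injective
    simp only [WithLp.ofLp_add, mulVecE_ofLp, hx k]
  · intro N
    simp only [iqc_form_eq, sectorForm_eq_dotProduct, mulVecE_ofLp]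
    have h2 := mul_nonneg (zero_le_two (α := ℝ)) (hI N)
    rw [Finset.mul_sum] at h2
    refine h2.trans_eq (Finset.sum_congr rfl fun k _ => ?_)
    ring

/-- A strict inequality `0 < Re (a(z)* b(z))` at a point of the circle of radius `ρ` yields a
non-real point strictly outside the circle at which the growing term of the supply dominates the
oscillating one, in the quantitative form needed by `growth_contradiction`. -/
theorem exists_outer_point {n : ℕ} {S : Set ℂ} (hS : S.Finite) {a b : ℂ → Fin n → ℂ}
    (ha : ∀ w, w ∉ S → ContinuousAt a w) (hb : ∀ w, w ∉ S → ContinuousAt b w) {ρ : ℝ}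
    (hρ : 0 < ρ) {z : ℂ} (hz : ‖z‖ = ρ) (hzA : z ∉ S) (hqz : 0 < (star (a z) ⬝ᵥ b z).re) :
    ∃ w, w ∉ S ∧ ρ < ‖w‖ ∧ w.im ≠ 0 ∧
      ‖a w ⬝ᵥ b w‖ * ((‖w‖ / ρ) ^ 2 - 1) < (star (a w) ⬝ᵥ b w).re * ‖(w / ρ) ^ 2 - 1‖ := by
  have hdot : Continuous fun p : (Fin n → ℂ) × (Fin n → ℂ) => p.1 ⬝ᵥ p.2 :=
    Continuous.dotProduct continuous_fst continuous_snd
  have hq : ∀ w, w ∉ S → ContinuousAt (fun w => (star (a w) ⬝ᵥ b w).re) w :=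
    fun w hw => Complex.continuous_re.continuousAt.comp
      (hdot.continuousAt.comp (x := w) (f := fun w => (star (a w), b w))
        ((ha w hw).star.prodMk (hb w hw)))
  have hs : ∀ w, w ∉ S → ContinuousAt (fun w => a w ⬝ᵥ b w) w :=
    fun w hw => hdot.continuousAt.comp (x := w) (f := fun w => (a w, b w))
      ((ha w hw).prodMk (hb w hw))
  -- A nearby point of the circle off the real axis, and off `S`, still violates the inequality.
  obtain ⟨w, hwt, hwn, hwS⟩ := exists_seq_circle
    (hS.union (Set.toFinite {(ρ : ℂ), -(ρ : ℂ)})) (z := z)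
    (by rw [← norm_pos_iff, hz]; exact hρ)
  obtain ⟨j, hjS, hjq⟩ := (hwS.and (((hq z hzA).tendsto.comp hwt).eventually
    (lt_mem_nhds hqz))).exists
  have hjq : 0 < (star (a (w j)) ⬝ᵥ b (w j)).re := hjq
  have hjn : ‖w j‖ = ρ := (hwn j).trans hz
  generalize w j = z₁ at hjS hjq hjn
  rw [Set.mem_union, not_or] at hjS
  obtain ⟨hzA₁, hz₁⟩ := hjS
  simp only [Set.mem_insert_iff, Set.mem_singleton_iff, not_or] at hz₁
  have him : z₁.im ≠ 0 := by
    intro h0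
    have hre : z₁ = (z₁.re : ℂ) := Complex.ext rfl (by simpa using h0)
    rw [hre, Complex.norm_real, Real.norm_eq_abs] at hjn
    rcases eq_or_eq_neg_of_abs_eq hjn with h | h
    · exact hz₁.1 (by rw [hre, h])
    · exact hz₁.2 (by rw [hre, h]; simp)
  have hρc : (ρ : ℂ) ≠ 0 := by exact_mod_cast hρ.ne'
  have hsq : (z₁ / ρ) ^ 2 ≠ 1 := by
    intro h0
    rw [div_pow, div_eq_one_iff_eq (pow_ne_zero _ hρc), sq_eq_sq_iff_eq_or_eq_neg] at h0
    exact h0.elim hz₁.1 hz₁.2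
  -- Moving radially outwards keeps the strict inequality for `r` slightly larger than `1`.
  let W : ℝ → ℂ := fun r => r * z₁
  have hWc : Continuous W := by fun_prop
  have hW1 : W 1 = z₁ := by simp [W]
  let g : ℝ → ℝ := fun r => (star (a (W r)) ⬝ᵥ b (W r)).re * ‖(W r / ρ) ^ 2 - 1‖ -
    ‖a (W r) ⬝ᵥ b (W r)‖ * ((‖W r‖ / ρ) ^ 2 - 1)
  have hgc : ContinuousAt g 1 := by
    have h1 : ContinuousAt (fun r => (star (a (W r)) ⬝ᵥ b (W r)).re) 1 :=
      ContinuousAt.comp (f := W) (g := fun w => (star (a w) ⬝ᵥ b w).re)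
        (by rw [hW1]; exact hq z₁ hzA₁) hWc.continuousAt
    have h2 : ContinuousAt (fun r => a (W r) ⬝ᵥ b (W r)) 1 :=
      ContinuousAt.comp (f := W) (g := fun w => a w ⬝ᵥ b w) (by rw [hW1]; exact hs z₁ hzA₁)
        hWc.continuousAt
    have h3 : Continuous fun r => ‖(W r / ρ) ^ 2 - 1‖ := by fun_prop
    have h4 : Continuous fun r => ((‖W r‖ / ρ) ^ 2 - 1) := by fun_prop
    exact (h1.mul h3.continuousAt).sub (h2.norm.mul h4.continuousAt)
  have hg1 : 0 < g 1 := by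
    simp only [g, hW1, hjn, div_self hρ.ne']
    have : 0 < ‖(z₁ / ρ) ^ 2 - 1‖ := norm_pos_iff.mpr (sub_ne_zero.mpr hsq)
    have := mul_pos hjq this
    linarith
  have hev1 : ∀ᶠ r in nhds (1 : ℝ), 0 < g r := hgc.eventually (lt_mem_nhds hg1)
  have hev2 : ∀ᶠ r in nhds (1 : ℝ), W r ∉ S := by
    have : Sᶜ ∈ nhds (W 1) := by
      rw [hW1]; exact hS.isClosed.isOpen_compl.mem_nhds hzA₁
    exact hWc.continuousAt.eventually this
  obtain ⟨r, ⟨hr1, hr2⟩, hr⟩ := (((hev1.and hev2).filter_mono nhdsWithin_le_nhds).and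
    (self_mem_nhdsWithin (a := (1 : ℝ)) (s := Set.Ioi 1))).exists
  have hr : 1 < r := hr
  have hWn : ‖W r‖ = r * ρ := by
    simp only [W, norm_mul, hjn, Complex.norm_real, Real.norm_of_nonneg (by linarith : 0 ≤ r)]
  have hWρ : ρ < ‖W r‖ := by rw [hWn]; nlinarith
  refine ⟨W r, hr2, hWρ, ?_, ?_⟩
  · simp only [W, Complex.mul_im, Complex.ofReal_re, Complex.ofReal_im, zero_mul, add_zero]
    exact mul_ne_zero (by linarith) him
  · simp only [g] at hr1
    linarith

/-- Necessity: a violation of the inequality on the circle is moved to a point outside it, which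
produces an admissible trajectory growing faster than `ρᵏ`. -/
theorem circleIneq_of_hyperstable {d n : ℕ} {A : Matrix (Fin d) (Fin d) ℝ}
    {B : Matrix (Fin d) (Fin n) ℝ} {C : Matrix (Fin n) (Fin d) ℝ} {m L ρ : ℝ}
    (hρ : 0 < ρ)
    (h : Hyperstable A B ((-(2 * L * m)) • (Cᵀ * C)) ((L + m) • C)
        ((-2 : ℝ) • (1 : Matrix (Fin n) (Fin n) ℝ)) ρ) :
    CircleIneq A B C m L ρ := by
  intro z X U hz hzA hX
  by_contra hneg
  rw [not_le] at hneg
  set Ac := A.map (Complex.ofReal ·) with hAc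
  set Bc := B.map (Complex.ofReal ·) with hBc
  set Cc := C.map (Complex.ofReal ·) with hCc
  let Y : ℂ → Fin d → ℂ := fun w => (w • (1 : Matrix (Fin d) (Fin d) ℂ) - Ac)⁻¹ *ᵥ (Bc *ᵥ U)
  let a : ℂ → Fin n → ℂ := fun w => U - (m : ℂ) • (Cc *ᵥ Y w)
  let b : ℂ → Fin n → ℂ := fun w => (L : ℂ) • (Cc *ᵥ Y w) - U
  have hXe : X = Y z := (resolvent_eq_iff hzA _ _).mp hX
  have hCY : ∀ w, w ∉ spectrum ℂ Ac → ContinuousAt (fun w => Cc *ᵥ Y w) w := fun w hw =>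
    (Continuous.matrix_mulVec continuous_const continuous_id).continuousAt.comp
      (continuousAt_resolvent hw (Bc *ᵥ U))
  have hcCY : ∀ (c : ℂ) (w : ℂ), w ∉ spectrum ℂ Ac → ContinuousAt (fun w => c • (Cc *ᵥ Y w)) w :=
    fun c w hw => (hCY w hw).const_smul c
  have ha : ∀ w, w ∉ spectrum ℂ Ac → ContinuousAt a w := fun w hw =>
    continuousAt_const.sub (hcCY m w hw)
  have hb : ∀ w, w ∉ spectrum ℂ Ac → ContinuousAt b w := fun w hw =>
    (hcCY L w hw).sub continuousAt_const
  have hqz : 0 < (star (a z) ⬝ᵥ b z).re := by rw [hXe] at hneg; exact hneg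
  obtain ⟨w, hwA, hwρ, him, hw⟩ :=
    exists_outer_point (Matrix.finite_spectrum Ac) ha hb hρ hz hzA hqz
  -- With zero state the form would be `-|U|² ≤ 0`.
  have hY0 : Y w ≠ 0 := by
    intro h0
    have haw : a w = U := by simp [a, h0]
    have hbw : b w = -U := by simp [b, h0]
    have hUU : 0 ≤ (star U ⬝ᵥ U).re := by
      have := dotProduct_star_self_nonneg U
      exact (Complex.nonneg_iff.mp this).1
    have hR : 0 ≤ (‖w‖ / ρ) ^ 2 - 1 := by
      have := one_lt_pow₀ ((one_lt_div hρ).mpr hwρ) two_ne_zero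
      linarith
    have hpos := (mul_nonneg (norm_nonneg (a w ⬝ᵥ b w)) hR).trans_lt hw
    rw [haw, hbw, dotProduct_neg, Complex.neg_re] at hpos
    nlinarith [norm_nonneg ((w / ρ) ^ 2 - 1)]
  exact growth_contradiction hρ h.exists_bound hwρ him hY0 ((resolvent_eq_iff hwA _ _).mpr rfl)
    (a := a w) (b := b w) rfl rfl hw

/-- **Lemma 2.11 (circle criterion).**  Let `M` be the sector IQC matrix
`M = [[-2L̄m̄ CᵀC, (L̄+m̄)Cᵀ],[(L̄+m̄)C, -2I]]`.  If `B ≠ 0` and `A + kBC` is ρ-Schur for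
some `k ∈ [m̄, L̄]`, then `(A,B,M)` is ρ-hyperstable iff the Hermitian part of
`(I - m̄H(z))ᴴ(I - L̄H(z))` is positive semidefinite for every `z` with `|z| = ρ` which is
not an eigenvalue of `A`, where `H(z) = C(zI-A)⁻¹B`. -/
theorem stmt_9 {d n : ℕ} (A : Matrix (Fin d) (Fin d) ℝ) (B : Matrix (Fin d) (Fin n) ℝ)
    (C : Matrix (Fin n) (Fin d) ℝ) (mb Lb ρ : ℝ) (hmL : mb < Lb) (hρ : 0 < ρ)
    (hB : B ≠ 0)
    (hk : ∃ k ∈ Set.Icc mb Lb, IsSchur ρ (A + k • (B * C))) :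
    Hyperstable A B ((-(2 * Lb * mb)) • (Cᵀ * C)) ((Lb + mb) • C)
        ((-2 : ℝ) • (1 : Matrix (Fin n) (Fin n) ℝ)) ρ ↔
      ∀ z : ℂ, ‖z‖ = ρ → z ∉ spectrum ℂ (A.map (Complex.ofReal ·)) →
        (((1 : ℂ) / 2) •
          (((1 - (mb : ℂ) • transferH A B C z)ᴴ * (1 - (Lb : ℂ) • transferH A B C z)) +
           ((1 - (mb : ℂ) • transferH A B C z)ᴴ * (1 - (Lb : ℂ) • transferH A B C z))ᴴ)).PosSemidef := by
  obtain ⟨κ, hκ, hS⟩ := hk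
  rw [← circleIneq_iff]
  exact ⟨circleIneq_of_hyperstable hρ, hyperstable_of_circleIneq hmL hρ hκ hS⟩
end

section
/- Let A ∈ ℝ^{d×d}, B ∈ ℝ^{d×n}, C ∈ ℝ^{n×d}, let m̄ < L̄ be real numbers, and let M be the sector IQC matrix M = [[−2L̄m̄ CᵀC, (L̄+m̄)Cᵀ],[(L̄+m̄)C, −2I]]. Let ρ ∈ (0,1) and suppose (A,B,M) is ρ-hyperstable. Then there exists c > 0 such that for every continuous φ : ℝⁿ → ℝⁿ satisfying ⟨m̄y − φ(y), L̄y − φ(y)⟩ ≤ 0 for all y ∈ ℝⁿ, every sequence x : ℕ → ℝ^d with x(k+1) = Ax(k) + Bφ(Cx(k)) for all k satisfies |x(k)| ≤ c ρᵏ |x(0)| for all k ≥ 0. -/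
/-!
Along a feedback trajectory put `u(k) = φ(C x(k))`. The quadratic form of the sector IQC matrix at
`(x(k), u(k))` equals `-2 ⟪m̄ y - φ(y), L̄ y - φ(y)⟫` with `y = C x(k)` (`sector_quadForm_eq`), so the
sector bound makes every summand of the IQC nonnegative. Hence `(x, u)` satisfies the ρ-IQC, and the
constant of hyperstability, which depends on neither `φ` nor `x`, bounds `x`.
-/

open Matrix Filter RealInnerProductSpace
open scoped ComplexOrder


/-- The quadratic form of the sector IQC matrix is `-2` times the sector form evaluated at the
output `y = C x`; this is where the transpose in the `Q` block becomes an adjoint. -/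
lemma sector_quadForm_eq {d n : ℕ} (C : Matrix (Fin n) (Fin d) ℝ) (mb Lb : ℝ)
    (x : EuclideanSpace ℝ (Fin d)) (u : EuclideanSpace ℝ (Fin n)) :
    ⟪mulVecE ((-(2 * Lb * mb)) • (Cᵀ * C)) x, x⟫ + 2 * ⟪mulVecE ((Lb + mb) • C) x, u⟫
        + ⟪mulVecE ((-2 : ℝ) • (1 : Matrix (Fin n) (Fin n) ℝ)) u, u⟫
      = -2 * ⟪mb • mulVecE C x - u, Lb • mulVecE C x - u⟫ := by
  have hQ : ⟪mulVecE ((-(2 * Lb * mb)) • (Cᵀ * C)) x, x⟫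
      = -(2 * Lb * mb) * ⟪mulVecE C x, mulVecE C x⟫ := by
    have hmul : mulVecE ((-(2 * Lb * mb)) • (Cᵀ * C)) x
        = (-(2 * Lb * mb)) • Matrix.toEuclideanLin Cᴴ (Matrix.toEuclideanLin C x) := by
      ext i
      simp [mulVecE, Matrix.toLpLin_apply]
    rw [hmul, real_inner_smul_left, Matrix.toEuclideanLin_conjTranspose_eq_adjoint,
      LinearMap.adjoint_inner_left]
    rfl
  have hS : mulVecE ((Lb + mb) • C) x = (Lb + mb) • mulVecE C x := by
    simp [mulVecE]
  have hR : mulVecE ((-2 : ℝ) • (1 : Matrix (Fin n) (Fin n) ℝ)) u = (-2 : ℝ) • u := by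
    ext i
    simp [mulVecE]
  rw [hQ, hS, hR]
  simp only [inner_sub_left, inner_sub_right, real_inner_smul_left, real_inner_smul_right,
    real_inner_comm u (mulVecE C x)]
  ring

/-- **Circle criterion consequence (§2.3).**  If `(A,B,M)` with the sector IQC matrix
`M = [[-2L̄m̄ CᵀC, (L̄+m̄)Cᵀ],[(L̄+m̄)C, -2I]]` is ρ-hyperstable for some `ρ ∈ (0,1)`, then
the feedback system `x(k+1) = A x(k) + B φ(C x(k))` is ρ-exponentially stable over the set
of continuous nonlinearities `φ` sector-bounded in `[m̄, L̄]`. -/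
theorem stmt_11 {d n : ℕ} (A : Matrix (Fin d) (Fin d) ℝ) (B : Matrix (Fin d) (Fin n) ℝ)
    (C : Matrix (Fin n) (Fin d) ℝ) (mb Lb ρ : ℝ) (hmL : mb < Lb)
    (hρ0 : 0 < ρ) (hρ1 : ρ < 1)
    (hhyp : Hyperstable A B ((-(2 * Lb * mb)) • (Cᵀ * C)) ((Lb + mb) • C)
      ((-2 : ℝ) • (1 : Matrix (Fin n) (Fin n) ℝ)) ρ) :
    ∃ c > 0, ∀ φ : EuclideanSpace ℝ (Fin n) → EuclideanSpace ℝ (Fin n),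
      Continuous φ →
      (∀ y : EuclideanSpace ℝ (Fin n), ⟪mb • y - φ y, Lb • y - φ y⟫ ≤ 0) →
      ∀ x : ℕ → EuclideanSpace ℝ (Fin d),
        (∀ k, x (k + 1) = mulVecE A (x k) + mulVecE B (φ (mulVecE C (x k)))) →
        ∀ k, ‖x k‖ ≤ c * ρ ^ k * ‖x 0‖ := by
  obtain ⟨c, hc, h⟩ := hhyp
  refine ⟨c, hc, fun φ _ hφ x hx => h x (fun k => φ (mulVecE C (x k))) hx ?_⟩
  intro N
  refine Finset.sum_nonneg fun k _ => mul_nonneg (by positivity) ?_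
  rw [sector_quadForm_eq]
  linarith [hφ (mulVecE C (x k))]
end
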